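/- arXiv:1703.02848 — 3 statements merged into one kernel-verified Lean document; each statement's English description precedes it below -/
import Mathlib

section
/- Let n ≥ 1 and let G be a subgroup of S_n = Equiv.Perm (Fin n) whose action on Fin n is transitive. Fix a point a ∈ Fin n and let Stab denote the stabilizer of a in G. Suppose that for every finite collection T of orbits of Stab on Fin n that includes the orbit of a (which is the singleton {a}), the sum s of the cardinalities of the orbits in T satisfies s = 1, or s = n, or s does not divide n. Then the action of G on Fin n is primitive (i.e. the induced MulAction of G on Fin n is preprimitive). -/
/-- A `MulAction` is preprimitive if it is pretransitive and every block is trivial. -/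
def IsPreprimitive (G : Type*) (X : Type*) [Group G] [MulAction G X] : Prop :=
  MulAction.IsPretransitive G X ∧
    ∀ B : Set X, MulAction.IsBlock G B → MulAction.IsTrivialBlock B

/-- Divisibility criterion for primitivity: if `G ≤ S_n` is transitive and, for a point
stabilizer `Stab` of `a`, every finite collection of `Stab`-orbits containing the orbit
of `a` has total cardinality `1`, `n`, or a non-divisor of `n`, then `G` is primitive. -/
theorem primitive_of_subdegrees (n : ℕ) (hn : 1 ≤ n)
    (G : Subgroup (Equiv.Perm (Fin n)))
    (htrans : MulAction.IsPretransitive G (Fin n))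
    (a : Fin n)
    (h : ∀ T : Finset (Set (Fin n)),
      (∀ O ∈ T, ∃ b : Fin n, O = MulAction.orbit (MulAction.stabilizer G a) b) →
      MulAction.orbit (MulAction.stabilizer G a) a ∈ T →
      (∑ O ∈ T, Nat.card O) = 1 ∨ (∑ O ∈ T, Nat.card O) = n ∨
        ¬ (∑ O ∈ T, Nat.card O) ∣ n) :
    IsPreprimitive G (Fin n) := by
  classical
  have key : ∀ B : Set (Fin n), a ∈ B → MulAction.IsBlock G B → MulAction.IsTrivialBlock B := by
    intro B haB hB
    let orb : Fin n → Set (Fin n) := fun b => MulAction.orbit (MulAction.stabilizer G a) b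
    have hsub : ∀ b ∈ B, orb b ⊆ B := by
      rintro b hb _ ⟨g, rfl⟩
      open scoped Pointwise in
      have hg : (g : G) • B = B := hB.stabilizer_le haB g.2
      open scoped Pointwise in
      have : (g : G) • b ∈ (g : G) • B := Set.smul_mem_smul_set hb
      rw [hg] at this
      exact this
    let T : Finset (Set (Fin n)) := B.toFinset.image orb
    have hsum : (∑ O ∈ T, Nat.card O) = B.ncard := by
      have h1 : B.toFinset = T.biUnion (fun O => O.toFinset) := by
        ext x
        simp only [T, Finset.mem_biUnion, Finset.mem_image, Set.mem_toFinset]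
        constructor
        · intro hx
          exact ⟨orb x, ⟨x, hx, rfl⟩, MulAction.mem_orbit_self x⟩
        · rintro ⟨_, ⟨b, hb, rfl⟩, hx⟩
          exact hsub b hb hx
      rw [Set.ncard_eq_toFinset_card', h1, Finset.card_biUnion]
      · refine Finset.sum_congr rfl fun O _ => ?_
        rw [Nat.card_eq_fintype_card, Set.toFinset_card]
      · intro O hO O' hO' hne
        simp only [T, Finset.coe_image, Set.mem_image] at hO hO'
        obtain ⟨b, -, rfl⟩ := hO
        obtain ⟨c, -, rfl⟩ := hO'
        rw [Function.onFun, Set.disjoint_toFinset, Set.disjoint_left]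
        intro x hx hx'
        exact hne ((MulAction.orbit_eq_iff.mpr hx).symm.trans (MulAction.orbit_eq_iff.mpr hx'))
    have hT := h T (by
      intro O hO
      obtain ⟨b, -, rfl⟩ := Finset.mem_image.mp hO
      exact ⟨b, rfl⟩) (Finset.mem_image.mpr ⟨a, by simpa using haB, rfl⟩)
    rw [hsum] at hT
    have hdvd : B.ncard ∣ n := by
      simpa using hB.ncard_dvd_card ⟨a, haB⟩
    rcases hT with h1 | h1 | h1
    · left
      obtain ⟨x, rfl⟩ := Set.ncard_eq_one.mp h1
      exact Set.subsingleton_singleton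
    · right
      exact Set.eq_of_subset_of_ncard_le (Set.subset_univ B) (by simp [h1])
    · exact absurd hdvd h1
  have hp : MulAction.IsPreprimitive G (Fin n) :=
    MulAction.IsPreprimitive.of_isTrivialBlock_base a (fun {B} h1 h2 => key B h1 h2)
  exact ⟨htrans, fun B hB => hp.isTrivialBlock_of_isBlock hB⟩
end

section
/- Let n = 52 and let x, y ∈ S_52 be the permutations given in the context, with z = (x·y)⁻¹. Then (x, y, z) is a nice triple; the cycle types of x, y, z are 8^5·4^3, 2^24 and 4^10·2^4 respectively; and the subgroup ⟨x, y⟩ of S_52 has cardinality 11232 (the order of Aut(PSL(3,3))). -/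
/-- `permInd s` = (sum of the cycle type of `s`) − (number of entries of the cycle type of `s`),
i.e. `n` minus the number of cycles of `s` when fixed points are counted as cycles. -/
def permInd {n : ℕ} (s : Equiv.Perm (Fin n)) : ℕ :=
  s.cycleType.sum - Multiset.card s.cycleType

/-- A triple `(x, y, z)` of permutations in `S_n` is *nice*:
(i) `x * y * z = 1`; (ii) `G = ⟨x, y⟩` is neither the alternating nor the symmetric group;
(iii) `G` acts primitively on `Fin n` and is almost simple; (iv) the triple has genus 0;
(v) the triple is rigid in `G`; (vi) `x`, `y`, `z` lie in rational conjugacy classes of `G`. -/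
def IsNice {n : ℕ} (x y z : Equiv.Perm (Fin n)) : Prop :=
  x * y * z = 1 ∧
  (Subgroup.closure {x, y} ≠ alternatingGroup (Fin n) ∧
    Subgroup.closure {x, y} ≠ ⊤) ∧
  IsPreprimitive (Subgroup.closure {x, y}) (Fin n) ∧
  (∃ S : Subgroup (Subgroup.closure {x, y}), S.Normal ∧ IsSimpleGroup S ∧
    (∃ a b : S, a * b ≠ b * a) ∧
    Subgroup.centralizer (S : Set (Subgroup.closure {x, y})) = ⊥) ∧
  permInd x + permInd y + permInd z = 2 * (n - 1) ∧
  (∀ x' y' z' : Equiv.Perm (Fin n),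
    x' * y' * z' = 1 →
    Subgroup.closure {x', y'} = Subgroup.closure {x, y} →
    (∃ g ∈ Subgroup.closure {x, y}, g * x * g⁻¹ = x') →
    (∃ g ∈ Subgroup.closure {x, y}, g * y * g⁻¹ = y') →
    (∃ g ∈ Subgroup.closure {x, y}, g * z * g⁻¹ = z') →
    ∃ g ∈ Subgroup.closure {x, y},
      g * x * g⁻¹ = x' ∧ g * y * g⁻¹ = y' ∧ g * z * g⁻¹ = z') ∧
  ∀ g ∈ ({x, y, z} : Set (Equiv.Perm (Fin n))), ∀ k : ℤ,
    Int.gcd k (orderOf g) = 1 →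
    ∃ h ∈ Subgroup.closure {x, y}, h * g * h⁻¹ = g ^ k

/-- The permutation given by a list of (disjoint) cycles, each written as a list of points. -/
def permOfCycles {n : ℕ} (cs : List (List (Fin n))) : Equiv.Perm (Fin n) :=
  (cs.map List.formPerm).prod

def x : Equiv.Perm (Fin 52) := permOfCycles [
  [1, 41, 8, 9, 45, 32, 39, 44],
  [2, 13, 29, 21, 50, 26, 34, 6],
  [3, 35, 52, 30],
  [4, 7, 22, 18, 33, 43, 10, 38],
  [5, 37, 27, 42, 25, 15, 12, 24],
  [11, 51, 17, 47, 36, 31, 49, 40],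
  [14, 20, 28, 48],
  [16, 19, 23, 46]]

def y : Equiv.Perm (Fin 52) := permOfCycles [
  [1, 20],
  [2, 34],
  [3, 7],
  [4, 16],
  [5, 17],
  [8, 41],
  [9, 13],
  [10, 52],
  [11, 40],
  [12, 23],
  [14, 29],
  [15, 25],
  [18, 33],
  [19, 47],
  [21, 35],
  [22, 43],
  [26, 42],
  [27, 45],
  [28, 36],
  [31, 39],
  [32, 49],
  [37, 51],
  [38, 48],
  [46, 50]]


namespace N52

/-- base-64 packing of the first `n` values of `f` -/
def E (f : ℕ → ℕ) : ℕ → ℕ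
  | 0 => 0
  | n + 1 => Nat.add (E f n) (Nat.mul (f n) (Nat.pow 64 n))

/-- digit -/
def dg (p i : ℕ) : ℕ := Nat.mod (Nat.div p (Nat.pow 64 i)) 64

/-- composition of codes -/
def mu (p q : ℕ) : ℕ := E (fun i => dg p (dg q i)) 52

theorem E_lt (f : ℕ → ℕ) (hf : ∀ i, f i < 64) (n : ℕ) : E f n < 64 ^ n := by
  induction n with
  | zero => simp [E]
  | succ n ih =>
    have := hf n
    change E f n + f n * 64 ^ n < 64 ^ (n + 1)
    rw [pow_succ]
    nlinarith [pow_pos (show 0 < 64 by norm_num) n]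

theorem dg_E (f : ℕ → ℕ) (hf : ∀ i, f i < 64) (n i : ℕ) (h : i < n) : dg (E f n) i = f i := by
  induction n with
  | zero => omega
  | succ n ih =>
    have hlt := E_lt f hf n
    change (E f n + f n * 64 ^ n) / 64 ^ i % 64 = f i
    rcases Nat.lt_succ_iff_lt_or_eq.mp h with h | rfl
    · rw [← ih h]
      change _ = E f n / 64 ^ i % 64
      obtain ⟨k, rfl⟩ : ∃ k, n = i + 1 + k := ⟨n - (i + 1), by omega⟩
      have : f (i + 1 + k) * 64 ^ (i + 1 + k) = 64 ^ i * (64 * (f (i + 1 + k) * 64 ^ k)) := by ring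
      rw [this, Nat.add_mul_div_left _ _ (by positivity), Nat.add_mul_mod_self_left]
    · rw [Nat.add_mul_div_right _ _ (by positivity), Nat.div_eq_of_lt hlt, zero_add,
        Nat.mod_eq_of_lt (hf i)]

abbrev P := Equiv.Perm (Fin 52)

def fn (g : P) (i : ℕ) : ℕ := if h : i < 52 then (g ⟨i, h⟩).val else 0

theorem fn_lt (g : P) (i : ℕ) : fn g i < 64 := by
  unfold fn; split
  · exact lt_trans (Fin.isLt _) (by norm_num)
  · norm_num

def enc (g : P) : ℕ := E (fn g) 52

theorem dg_enc (g : P) (i : Fin 52) : dg (enc g) i.val = (g i).val := by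
  rw [enc, dg_E _ (fn_lt g) _ _ i.isLt]; simp [fn]

theorem enc_inj {g h : P} (e : enc g = enc h) : g = h := by
  ext i; rw [← dg_enc, ← dg_enc, e]

theorem E_congr (f g : ℕ → ℕ) (n : ℕ) (h : ∀ i, i < n → f i = g i) : E f n = E g n := by
  induction n with
  | zero => rfl
  | succ n ih => simp only [E]; rw [ih (fun i hi => h i (by omega)), h n (by omega)]

theorem enc_mul (g h : P) : enc (g * h) = mu (enc g) (enc h) := by
  apply E_congr
  intro i hi
  have h1 := dg_enc h ⟨i, hi⟩
  simp only at h1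
  rw [h1, dg_enc]; simp [fn, hi]

def xc : ℕ := 2270538469394868522841557079400597265079365699361693789596147961472451879711642793212220594782
def yc : ℕ := 4918442416908813700364214753906512856337726194751056378755562308499296822712131403659190609162
def oc : ℕ := E (fun i => i) 52

theorem enc_one : enc 1 = oc := by
  apply E_congr; intro i hi; simp [fn, hi]

theorem enc_x : enc x = xc := by decide +kernel
theorem enc_y : enc y = yc := by decide +kernel

/-- strict evaluation -/
def sq {β : Type} (n : ℕ) (f : ℕ → β) : β := Nat.rec (f 0) (fun k _ => f (Nat.succ k)) n

theorem sq_eq {β : Type} (n : ℕ) (f : ℕ → β) : sq n f = f n := by cases n <;> rfl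

def fl {β : Type} : List ℕ → (List ℕ → β) → β
  | [], k => k []
  | a :: l, k => sq a (fun a' => fl l (fun l' => k (a' :: l')))

theorem fl_eq {β : Type} (l : List ℕ) (k : List ℕ → β) : fl l k = k l := by
  induction l generalizing k with
  | nil => rfl
  | cons a l ih => simp [fl, sq_eq, ih]

def pwc (p : ℕ) : ℕ → ℕ
  | 0 => oc
  | n + 1 => sq (pwc p n) (fun r => mu r p)

theorem enc_pow (g : P) (n : ℕ) : enc (g ^ n) = pwc (enc g) n := by
  induction n with
  | zero => simpa [pwc] using enc_one
  | succ n ih => rw [pow_succ, enc_mul, ih, pwc, sq_eq]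

def ev : List ℕ → P
  | [] => 1
  | k :: w => x ^ k * y * ev w

def evc : List ℕ → ℕ
  | [] => oc
  | k :: w => sq (evc w) (fun r => sq (mu yc r) (fun s => sq (pwc xc k) (fun t => mu t s)))

theorem enc_ev (w : List ℕ) : enc (ev w) = evc w := by
  induction w with
  | nil => exact enc_one
  | cons k w ih => rw [ev, mul_assoc, enc_mul, enc_mul, ih, enc_pow, enc_x, enc_y, evc]; simp [sq_eq]

abbrev G : Subgroup P := Subgroup.closure {x, y}

theorem x_mem : x ∈ G := Subgroup.subset_closure (by simp)
theorem y_mem : y ∈ G := Subgroup.subset_closure (by simp)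
theorem ev_mem (w : List ℕ) : ev w ∈ G := by
  induction w with
  | nil => exact one_mem _
  | cons k w ih => exact mul_mem (mul_mem (pow_mem x_mem _) y_mem) ih

/-- products of two lists -/
def pr (A B : List ℕ) : List ℕ := A.flatMap (fun a => B.map (mu a))
def prP (A B : List P) : List P := A.flatMap (fun a => B.map (fun b => a * b))

theorem pr_enc (A B : List P) : (prP A B).map enc = pr (A.map enc) (B.map enc) := by
  simp [prP, pr, List.map_flatMap, List.flatMap_map, Function.comp_def, enc_mul]

def pwl (p : ℕ) (n : ℕ) : List ℕ := (List.range n).map (pwc p)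
def pwP (p : P) (n : ℕ) : List P := (List.range n).map (fun k => p ^ k)
theorem pwl_enc (p : P) (n : ℕ) : (pwP p n).map enc = pwl (enc p) n := by
  simp [pwP, pwl, Function.comp_def, enc_pow]



/-- membership test -/
def el (a : ℕ) : List ℕ → Bool
  | [] => false
  | b :: l => (Nat.beq a b).or (el a l)

theorem mem_of_el {a : ℕ} {l : List ℕ} (h : el a l = true) : a ∈ l := by
  induction l with
  | nil => simp [el] at h
  | cons b l ih =>
    simp only [el, Bool.or_eq_true, Nat.beq_eq] at h
    rcases h with h | h
    · simp [h]
    · simp [ih h]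

theorem not_mem_of_el {a : ℕ} {l : List ℕ} (h : el a l = false) : a ∉ l := by
  induction l with
  | nil => simp
  | cons b l ih =>
    simp only [el, Bool.or_eq_false_iff] at h
    simp only [List.mem_cons, not_or]
    exact ⟨fun e => by simp [e] at h, ih h.2⟩

def nd : List ℕ → Bool
  | [] => true
  | a :: l => (el a l).not.and (nd l)

theorem nodup_of_nd {l : List ℕ} (h : nd l = true) : l.Nodup := by
  induction l with
  | nil => simp
  | cons a l ih =>
    simp only [nd, Bool.and_eq_true, Bool.not_eq_true'] at h
    exact List.nodup_cons.mpr ⟨not_mem_of_el h.1, ih h.2⟩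

theorem mem_enc {p : P} {L : List P} : enc p ∈ L.map enc ↔ p ∈ L :=
  List.mem_map_of_injective (fun _ _ h => enc_inj h)

def t : P := ev [6, 3, 6, 3]
def tc : ℕ := evc [6, 3, 6, 3]
theorem enc_t : enc t = tc := enc_ev _

def HP : List P :=
  prP (pwP (ev [4, 0]) 2) (prP (pwP (ev [3, 1, 0]) 6) (prP (pwP (ev [2, 2, 4, 1]) 6) (pwP t 3)))
def HC : List ℕ :=
  pr (pwl (evc [4, 0]) 2) (pr (pwl (evc [3, 1, 0]) 6) (pr (pwl (evc [2, 2, 4, 1]) 6) (pwl tc 3)))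
theorem HP_enc : HP.map enc = HC := by
  simp only [HP, HC, pr_enc, pwl_enc, enc_ev, enc_t]

def UP : List P := prP (pwP (ev [4, 1]) 13) ([[], [3, 0], [0], [1]].map ev)
def UC : List ℕ := pr (pwl (evc [4, 1]) 13) ([[], [3, 0], [0], [1]].map evc)
def VP : List P := prP ([[], [5, 0], [0], [0, 7, 0]].map ev) (pwP (ev [4, 1]) 13)
def VC : List ℕ := pr ([[], [5, 0], [0], [0, 7, 0]].map evc) (pwl (evc [4, 1]) 13)
theorem UP_enc : UP.map enc = UC := by
  simp only [UP, UC, pr_enc, pwl_enc, enc_ev, List.map_map, Function.comp_def]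
theorem VP_enc : VP.map enc = VC := by
  simp only [VP, VC, pr_enc, pwl_enc, enc_ev, List.map_map, Function.comp_def]

set_option maxRecDepth 100000

theorem chk_nodup : fl HC nd = true := by decide +kernel
theorem chk_fix : fl HC (fun H => H.all (fun h => Nat.beq (dg h 0) 0)) = true := by decide +kernel
theorem chk_norm : fl HC (fun H => sq tc fun s => sq (mu s s) fun s2 =>
    H.all (fun h => sq (mu h s) fun r => (Nat.beq r (mu s h)).or (Nat.beq r (mu s2 h)))) = true := by
  decide +kernel
theorem chk_one : fl HC (fun H => el oc H) = true := by decide +kernel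
theorem chk_closed : fl HC (fun H =>
    fl ([[4, 0], [3, 1, 0], [2, 2, 4, 1], [6, 3, 6, 3]].map evc) fun g =>
    g.all fun e => H.all fun h => sq (mu e h) fun r => el r H) = true := by
  decide +kernel
theorem chk_inv : fl VC (fun V => fl UC fun U => V.all fun v => U.any fun u =>
    (Nat.beq (dg v (dg u 0)) 0).and (Nat.beq (mu v u) oc)) = true := by
  decide +kernel
theorem chk_V : fl VC (fun V => V.all fun v => (Nat.beq (dg v 0) 0).not.or (Nat.beq v oc)) = true := by
  decide +kernel
theorem chk_schreier : fl HC (fun H => fl VC fun V => fl UC fun U => [xc, yc].all fun s => U.all fun u =>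
    sq (mu s u) fun r => V.any fun v => (Nat.beq (dg v (dg r 0)) 0).and (sq (mu v r) fun a => el a H)) = true := by
  decide +kernel
theorem chk_trans : fl UC (fun U => (List.range 52).all fun i => U.any fun u => Nat.beq (dg u 0) i) = true := by
  decide +kernel

def o1 : List (Fin 52) := [9, 14, 15, 19, 37, 44]
def o2 : List (Fin 52) := [6, 10, 13, 16, 17, 18, 20, 21, 22, 23, 26, 28, 38, 40, 46, 47, 48, 49]
def o3 : List (Fin 52) := [1, 2, 3, 4, 5, 7, 8, 11, 12, 24, 25, 27, 29, 30, 31, 32, 33, 34, 35, 36,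
  39, 41, 42, 43, 45, 50, 51]
def obs : List (Fin 52 × List (Fin 52)) := [(9, o1), (6, o2), (1, o3)]

theorem chk_sub : fl HC (fun H => obs.all fun q => q.2.all fun i => H.any fun h =>
    Nat.beq (dg h q.1.val) i.val) = true := by
  decide +kernel

def RW : List (List ℕ) := [[0], [4, 5, 4], [0, 6, 2], [4, 4, 1], [0, 4, 4], [0, 5, 3], [7, 3, 3],
  [4, 2, 4], [4, 6, 4], [5, 5, 1], [7, 4, 4], [3, 3, 3], [0, 3, 5], [0, 7, 1], [1, 2, 1], [0, 2, 6],
  [3, 5, 7, 2, 5], [6, 3, 5, 3, 1], [6, 6, 7, 5, 2], [0, 2, 5, 4, 2], [0, 6, 6, 2, 2],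
  [3, 6, 6, 3, 2], [0, 2, 2, 4, 2], [3, 2, 5, 3, 2], [0, 3, 5, 3, 5], [0, 2, 7, 6, 5],
  [0, 2, 7, 3, 1], [1, 3, 6, 2, 2], [0, 3, 6, 2, 5], [5, 2, 7, 5, 3], [0, 6, 5, 3, 2],
  [6, 3, 6, 6, 3]]

def cjP (q : P) : List P := (List.range 8).map fun k => x ^ k * (q * x ^ (8 - k))
def cjc (q : ℕ) : List ℕ := (List.range 8).map fun k =>
  sq (pwc xc (8 - k)) fun a => sq (mu q a) fun b => sq (pwc xc k) fun c => mu c b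
theorem cj_enc (q : P) : (cjP q).map enc = cjc (enc q) := by
  simp [cjP, cjc, Function.comp_def, sq_eq, enc_mul, enc_pow, enc_x]

def YP : List P := RW.flatMap fun w => cjP (ev w)
def YC : List ℕ := RW.flatMap fun w => sq (evc w) cjc
theorem YP_enc : YP.map enc = YC := by
  simp [YP, YC, List.map_flatMap, cj_enc, enc_ev, sq_eq]

theorem chk_Yclosed : fl YC (fun Y => sq (pwc xc 7) fun x7 => Y.all fun q =>
    (sq (mu xc q) fun r => sq (mu r x7) fun a => el a Y).and (sq (mu yc q) fun r => sq (mu r yc) fun a => el a Y)) = true := by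
  decide +kernel
theorem chk_y : fl YC (fun Y => el yc Y) = true := by decide +kernel
theorem chk_rigid : fl YC (fun Y => fl (cjc yc) fun C => Y.all fun q =>
    sq (mu xc q) fun r => sq (mu r r) fun r2 =>
      (Nat.beq r2 oc).or ((Nat.beq (mu r2 r2) oc).not.or (el q C))) = true := by
  decide +kernel

theorem ext_ev {v w : List ℕ} (h : evc v = evc w) : ev v = ev w :=
  enc_inj (by rw [enc_ev, enc_ev, h])

theorem x8 : x ^ 8 = 1 := enc_inj (by rw [enc_pow, enc_one, enc_x]; decide +kernel)
theorem yy : y * y = 1 := enc_inj (by rw [enc_mul, enc_one, enc_y]; decide +kernel)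

theorem ev_append (v w : List ℕ) : ev (v ++ w) = ev v * ev w := by
  induction v with
  | nil => simp [ev]
  | cons a v ih => simp [ev, ih, mul_assoc]

theorem x_eq : x = ev [1, 0] := by simp [ev, mul_assoc, yy]
theorem y_eq : y = ev [0] := by simp [ev]

/-- `t` and its conjugates -/
theorem fact_comm : ev ([1, 1] ++ [6, 3, 6, 3] ++ [1, 1] ++ ([1, 2] ++ [6, 3, 6, 3] ++ [0, 6, 7, 0])) =
    ev ([6, 3, 6, 3] ++ ([1, 2] ++ [6, 3, 6, 3] ++ [0, 6, 7, 0]) ++ ([1, 1] ++ [6, 3, 6, 3] ++ [1, 1])) :=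
  ext_ev (by decide +kernel)
theorem fact_b : ev [1, 1] * ev [1, 1] = 1 := by
  rw [← ev_append]; exact ext_ev (w := []) (by decide +kernel)
theorem fact_c : ev [1, 2] * ev [0, 6, 7, 0] = 1 := by
  rw [← ev_append]; exact ext_ev (w := []) (by decide +kernel)
theorem fact_d : ev [7, 7] * ev [7, 7] = 1 := by
  rw [← ev_append]; exact ext_ev (w := []) (by decide +kernel)
theorem fact_e : ev [0, 2, 1] * ev [0, 7, 6] = 1 := by
  rw [← ev_append]; exact ext_ev (w := []) (by decide +kernel)
theorem fact_f : ev [5, 5, 1] * ev [5, 5, 1] = 1 := by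
  rw [← ev_append]; exact ext_ev (w := []) (by decide +kernel)
theorem fact_x : x = (ev [7, 7] * t * ev [7, 7]) * (ev [0, 2, 1] * t * ev [0, 7, 6]) *
    (ev [5, 5, 1] * t * ev [5, 5, 1]) := by
  rw [x_eq, t]; simp only [← ev_append]; exact ext_ev (by decide +kernel)
theorem t_ne : t ≠ 1 := fun h => absurd (congrArg enc h) (by rw [enc_t, enc_one]; decide +kernel)
theorem t3 : t ^ 3 = 1 := enc_inj (by rw [enc_pow, enc_one, enc_t]; decide +kernel)
theorem rat3 : ev [0, 3, 6, 2, 4, 1] * x = x ^ 3 * ev [0, 3, 6, 2, 4, 1] :=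
  enc_inj (by simp only [enc_mul, enc_pow, enc_ev, enc_x]; decide +kernel)
theorem rat5 : ev [0, 3, 6, 6, 3] * x = x ^ 5 * ev [0, 3, 6, 6, 3] :=
  enc_inj (by simp only [enc_mul, enc_pow, enc_ev, enc_x]; decide +kernel)
theorem rat7 : ev [0, 4, 4] * x = x ^ 7 * ev [0, 4, 4] :=
  enc_inj (by simp only [enc_mul, enc_pow, enc_ev, enc_x]; decide +kernel)
theorem z_eq : (x * y)⁻¹ = ev [0, 7, 0] := by
  rw [inv_eq_iff_mul_eq_one, x_eq, y_eq, ← ev_append, ← ev_append]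
  exact ext_ev (w := []) (by decide +kernel)
theorem ratz : ev [5, 4, 4] * ev [0, 7, 0] = ev [0, 7, 0] ^ 3 * ev [5, 4, 4] :=
  enc_inj (by simp only [enc_mul, enc_pow, enc_ev]; decide +kernel)
theorem z4 : ev [0, 7, 0] ^ 4 = 1 :=
  enc_inj (by simp only [enc_one, enc_pow, enc_ev]; decide +kernel)
theorem z2 : ev [0, 7, 0] ^ 2 ≠ 1 :=
  fun h => absurd (congrArg enc h) (by simp only [enc_one, enc_pow, enc_ev]; decide +kernel)

theorem G_ind {Q : P → Prop} (h1 : Q 1) (hx : ∀ g, Q g → Q (x * g))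
    (hy : ∀ g, Q g → Q (y * g)) (g : P) (hg : g ∈ G) : Q g := by
  have hxk : ∀ k : ℕ, ∀ g, Q g → Q (x ^ k * g) := by
    intro k
    induction k with
    | zero => intro g h; simpa using h
    | succ k ih => intro g h; rw [pow_succ, mul_assoc]; exact ih _ (hx _ h)
  have hxi : x⁻¹ = x ^ 7 := by
    rw [inv_eq_iff_mul_eq_one, ← pow_succ']; exact x8
  have hyi : y⁻¹ = y := by
    rw [inv_eq_iff_mul_eq_one]; exact yy
  induction hg using Subgroup.closure_induction_left with
  | one => exact h1
  | mul_left s hs g _ ih =>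
    rcases hs with rfl | hs
    · exact hx _ ih
    · rw [Set.mem_singleton_iff] at hs; subst hs; exact hy _ ih
  | inv_mul_cancel s hs g _ ih =>
    rcases hs with rfl | hs
    · rw [hxi]; exact hxk 7 _ ih
    · rw [Set.mem_singleton_iff] at hs; subst hs; rw [hyi]; exact hy _ ih

theorem mem_prP {A B : List P} {p : P} : p ∈ prP A B ↔ ∃ a ∈ A, ∃ b ∈ B, a * b = p := by
  simp [prP]
theorem mem_pwP {e : P} {n : ℕ} {p : P} : p ∈ pwP e n ↔ ∃ k, k < n ∧ e ^ k = p := by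
  simp [pwP]

theorem one_HP : (1 : P) ∈ HP := by
  have := chk_one
  rw [fl_eq] at this
  rw [← mem_enc, HP_enc, enc_one]; exact mem_of_el this

def HM : Submonoid P where
  carrier := {p | ∀ h ∈ HP, p * h ∈ HP}
  one_mem' := fun h hh => by simpa using hh
  mul_mem' := fun {a b} ha hb h hh => by rw [mul_assoc]; exact ha _ (hb _ hh)

theorem HM_gen (w : List ℕ) (hw : w ∈ [[4, 0], [3, 1, 0], [2, 2, 4, 1], [6, 3, 6, 3]]) :
    ev w ∈ HM := by
  have := chk_closed
  rw [fl_eq, fl_eq] at this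
  simp only [sq_eq] at this
  rw [List.all_eq_true] at this
  have := this (evc w) (List.mem_map_of_mem hw)
  rw [List.all_eq_true] at this
  intro h hh
  have := mem_of_el (this (enc h) (by rw [← HP_enc]; exact List.mem_map_of_mem hh))
  rw [← enc_ev, ← enc_mul, ← HP_enc, mem_enc] at this
  exact this

theorem HP_le (S : Submonoid P) (h1 : ev [4, 0] ∈ S) (h2 : ev [3, 1, 0] ∈ S)
    (h3 : ev [2, 2, 4, 1] ∈ S) (h4 : t ∈ S) (p : P) (hp : p ∈ HP) : p ∈ S := by
  simp only [HP, mem_prP, mem_pwP] at hp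
  obtain ⟨_, ⟨i, _, rfl⟩, _, ⟨_, ⟨j, _, rfl⟩, _, ⟨_, ⟨k, _, rfl⟩, _, ⟨l, _, rfl⟩, rfl⟩, rfl⟩, rfl⟩ := hp
  exact mul_mem (pow_mem h1 _) (mul_mem (pow_mem h2 _) (mul_mem (pow_mem h3 _) (pow_mem h4 _)))

theorem HP_mul {p q : P} (hp : p ∈ HP) (hq : q ∈ HP) : p * q ∈ HP :=
  HP_le HM (HM_gen _ (by simp)) (HM_gen _ (by simp)) (HM_gen _ (by simp)) (HM_gen _ (by simp)) p hp q hq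

theorem HP_G {p : P} (hp : p ∈ HP) : p ∈ G :=
  HP_le G.toSubmonoid (ev_mem _) (ev_mem _) (ev_mem _) (ev_mem _) p hp

theorem HP_fix {p : P} (hp : p ∈ HP) : p 0 = 0 := by
  have := chk_fix
  rw [fl_eq, List.all_eq_true] at this
  have := this (enc p) (by rw [← HP_enc]; exact List.mem_map_of_mem hp)
  rw [Nat.beq_eq] at this
  have h := dg_enc p 0
  apply Fin.ext
  rw [← h]; exact this

theorem UP_G {u : P} (hu : u ∈ UP) : u ∈ G := by
  simp only [UP, mem_prP, mem_pwP, List.mem_map] at hu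
  obtain ⟨_, ⟨k, _, rfl⟩, _, ⟨w, _, rfl⟩, rfl⟩ := hu
  exact mul_mem (pow_mem (ev_mem _) _) (ev_mem _)

theorem V_inv {v : P} (hv : v ∈ VP) : v⁻¹ ∈ UP := by
  have := chk_inv
  rw [fl_eq, fl_eq, List.all_eq_true] at this
  have := this (enc v) (by rw [← VP_enc]; exact List.mem_map_of_mem hv)
  rw [List.any_eq_true] at this
  obtain ⟨c, hc, h⟩ := this
  rw [← UP_enc, List.mem_map] at hc
  obtain ⟨u, hu, rfl⟩ := hc
  simp only [Bool.and_eq_true, Nat.beq_eq] at h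
  have h2 := h.2
  rw [← enc_mul, ← enc_one] at h2
  have := enc_inj h2
  rwa [inv_eq_of_mul_eq_one_right this]

theorem V_fix {v : P} (hv : v ∈ VP) (h0 : v 0 = 0) : v = 1 := by
  have := chk_V
  rw [fl_eq, List.all_eq_true] at this
  have := this (enc v) (by rw [← VP_enc]; exact List.mem_map_of_mem hv)
  have h := dg_enc v 0
  rw [h0] at h
  simp only [Bool.or_eq_true, Bool.not_eq_true', Nat.beq_eq] at this
  rcases this with this | this
  · simp only [Fin.val_zero] at h
    rw [h] at this; simp at this
  · exact enc_inj (by rw [this, enc_one])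

theorem schreier {s u : P} (hs : s = x ∨ s = y) (hu : u ∈ UP) : ∃ v ∈ VP, v * (s * u) ∈ HP := by
  have := chk_schreier
  rw [fl_eq, fl_eq, fl_eq] at this
  simp only [sq_eq] at this
  rw [List.all_eq_true] at this
  have := this (enc s) (by rcases hs with rfl | rfl <;> simp [enc_x, enc_y])
  rw [List.all_eq_true] at this
  have := this (enc u) (by rw [← UP_enc]; exact List.mem_map_of_mem hu)
  rw [List.any_eq_true] at this
  obtain ⟨c, hc, h⟩ := this
  rw [← VP_enc, List.mem_map] at hc
  obtain ⟨v, hv, rfl⟩ := hc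
  rw [Bool.and_eq_true] at h
  have h2 := mem_of_el h.2
  rw [← enc_mul, ← enc_mul, ← HP_enc, mem_enc] at h2
  exact ⟨v, hv, h2⟩

theorem one_VP : (1 : P) ∈ VP := by
  simp only [VP, mem_prP, mem_pwP]
  exact ⟨1, by simp [ev], 1, ⟨0, by norm_num, by simp⟩, by simp⟩

theorem decomp (g : P) (hg : g ∈ G) : ∃ v ∈ VP, v * g ∈ HP := by
  have step : ∀ s : P, (s = x ∨ s = y) → ∀ g, (∃ v ∈ VP, v * g ∈ HP) → ∃ v ∈ VP, v * (s * g) ∈ HP := by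
    rintro s hs g ⟨v, hv, h⟩
    obtain ⟨v', hv', h'⟩ := schreier hs (V_inv hv)
    refine ⟨v', hv', ?_⟩
    have := HP_mul h' h
    rwa [show v' * (s * v⁻¹) * (v * g) = v' * (s * g) by group] at this
  refine G_ind (Q := fun g => ∃ v ∈ VP, v * g ∈ HP) ⟨1, one_VP, by simpa using one_HP⟩
    (fun g h => step x (Or.inl rfl) g h) (fun g h => step y (Or.inr rfl) g h) g hg

theorem stab_HP {g : P} (hg : g ∈ G) (h0 : g 0 = 0) : g ∈ HP := by
  obtain ⟨v, hv, h⟩ := decomp g hg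
  have h1 := HP_fix h
  rw [Equiv.Perm.mul_apply, h0] at h1
  rw [V_fix hv h1, one_mul] at h
  exact h

theorem trans0 (i : Fin 52) : ∃ g ∈ G, g 0 = i := by
  have := chk_trans
  rw [fl_eq, List.all_eq_true] at this
  have := this i.val (by simp)
  rw [List.any_eq_true] at this
  obtain ⟨c, hc, h⟩ := this
  rw [← UP_enc, List.mem_map] at hc
  obtain ⟨u, hu, rfl⟩ := hc
  rw [Nat.beq_eq] at h
  refine ⟨u, UP_G hu, Fin.ext ?_⟩
  rw [← h]; exact (dg_enc u 0).symm

theorem smul_eq (g : G) (i : Fin 52) : g • i = (g : P) i := rfl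

instance pretrans : MulAction.IsPretransitive G (Fin 52) where
  exists_smul_eq a b := by
    obtain ⟨g, hg, rfl⟩ := trans0 a
    obtain ⟨h, hh, rfl⟩ := trans0 b
    exact ⟨⟨h * g⁻¹, mul_mem hh (inv_mem hg)⟩, by simp⟩

theorem card_stab : Nat.card (MulAction.stabilizer G (0 : Fin 52)) = 216 := by
  have hn := chk_nodup
  rw [fl_eq] at hn
  have hn := nodup_of_nd hn
  have hl : HC.length = 216 := by
    rw [← HP_enc]; simp [HP, prP, pwP, List.length_flatMap, Function.comp_def]
  let f : MulAction.stabilizer G (0 : Fin 52) → ℕ := fun g => enc ((g : G) : P)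
  have hf : Function.Injective f := fun a b h => Subtype.ext (Subtype.ext (enc_inj h))
  have hr : Set.range f = (HC.toFinset : Set ℕ) := by
    ext c
    simp only [Set.mem_range, List.coe_toFinset, Set.mem_ofPred_eq]
    constructor
    · rintro ⟨g, rfl⟩
      rw [← HP_enc, mem_enc]
      exact stab_HP g.1.2 g.2
    · intro hc
      rw [← HP_enc, List.mem_map] at hc
      obtain ⟨h, hh, rfl⟩ := hc
      exact ⟨⟨⟨h, HP_G hh⟩, HP_fix hh⟩, rfl⟩
  rw [← Set.ncard_univ, ← Set.ncard_image_of_injective _ hf, Set.image_univ, hr, Set.ncard_coe_finset,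
    List.toFinset_card_of_nodup hn, hl]

theorem card_G : Nat.card G = 11232 := by
  rw [← Subgroup.card_mul_index (MulAction.stabilizer G (0 : Fin 52)), card_stab,
    MulAction.index_stabilizer_of_transitive]
  simp

theorem sub_mem (q : Fin 52 × List (Fin 52)) (hq : q ∈ obs) (i : Fin 52) (hi : i ∈ q.2) :
    ∃ h : G, h • (0 : Fin 52) = 0 ∧ h • q.1 = i := by
  have := chk_sub
  rw [fl_eq, List.all_eq_true] at this
  have := this q hq
  rw [List.all_eq_true] at this
  have := this i hi
  rw [List.any_eq_true] at this
  obtain ⟨c, hc, h⟩ := this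
  rw [← HP_enc, List.mem_map] at hc
  obtain ⟨p, hp, rfl⟩ := hc
  rw [Nat.beq_eq, dg_enc] at h
  exact ⟨⟨p, HP_G hp⟩, HP_fix hp, Fin.ext h⟩

open scoped Pointwise in
theorem block_mem (B : Set (Fin 52)) (h0 : 0 ∈ B) (hB : MulAction.IsBlock G B)
    (q : Fin 52 × List (Fin 52)) (hq : q ∈ obs) (i : Fin 52) (hi : i ∈ q.2) : i ∈ B ↔ q.1 ∈ B := by
  obtain ⟨h, hh, rfl⟩ := sub_mem q hq i hi
  have e : h • B = B := hB.smul_eq_of_mem h0 (by rw [hh]; exact h0)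
  nth_rewrite 1 [← e]
  exact Set.smul_mem_smul_set_iff

theorem prim : MulAction.IsPreprimitive G (Fin 52) := by
  apply MulAction.IsPreprimitive.of_isTrivialBlock_base (0 : Fin 52)
  intro B h0 hB
  have hd := hB.ncard_dvd_card ⟨0, h0⟩
  rw [Nat.card_eq_fintype_card, Fintype.card_fin] at hd
  have b1 := block_mem B h0 hB (9, o1) (by simp [obs])
  have b2 := block_mem B h0 hB (6, o2) (by simp [obs])
  have b3 := block_mem B h0 hB (1, o3) (by simp [obs])
  simp only at b1 b2 b3
  have hall : ∀ i : Fin 52, i = 0 ∨ i ∈ o1 ∨ i ∈ o2 ∨ i ∈ o3 := by decide +kernel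
  have key : ∀ (F : List (Fin 52)), (∀ i, i ∈ B ↔ i ∈ F) → F.toFinset.card ∣ 52 := by
    intro F hF
    have : B = (F.toFinset : Set (Fin 52)) := by ext i; simp [hF]
    rwa [this, Set.ncard_coe_finset] at hd
  by_cases c1 : (9 : Fin 52) ∈ B <;> by_cases c2 : (6 : Fin 52) ∈ B <;> by_cases c3 : (1 : Fin 52) ∈ B
  · right
    ext i
    simp only [Set.mem_univ, iff_true]
    rcases hall i with rfl | h | h | h
    · exact h0
    · exact (b1 i h).2 c1
    · exact (b2 i h).2 c2
    · exact (b3 i h).2 c3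
  · exact absurd (key (0 :: (o1 ++ o2)) (by
      have n3 : ∀ i ∈ o3, i ∉ 0 :: (o1 ++ o2) := by decide +kernel
      grind)) (by decide +kernel)
  · exact absurd (key (0 :: (o1 ++ o3)) (by
      have n3 : ∀ i ∈ o2, i ∉ 0 :: (o1 ++ o3) := by decide +kernel
      grind)) (by decide +kernel)
  · exact absurd (key (0 :: o1) (by
      have n2 : ∀ i ∈ o2, i ∉ 0 :: o1 := by decide +kernel
      have n3 : ∀ i ∈ o3, i ∉ 0 :: o1 := by decide +kernel
      grind)) (by decide +kernel)
  · exact absurd (key (0 :: (o2 ++ o3)) (by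
      have n3 : ∀ i ∈ o1, i ∉ 0 :: (o2 ++ o3) := by decide +kernel
      grind)) (by decide +kernel)
  · exact absurd (key (0 :: o2) (by
      have n2 : ∀ i ∈ o1, i ∉ 0 :: o2 := by decide +kernel
      have n3 : ∀ i ∈ o3, i ∉ 0 :: o2 := by decide +kernel
      grind)) (by decide +kernel)
  · exact absurd (key (0 :: o3) (by
      have n2 : ∀ i ∈ o1, i ∉ 0 :: o3 := by decide +kernel
      have n3 : ∀ i ∈ o2, i ∉ 0 :: o3 := by decide +kernel
      grind)) (by decide +kernel)
  · left
    intro a ha b hb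
    have : ∀ i ∈ B, i = 0 := by grind
    rw [this a ha, this b hb]

theorem norm_t {h : P} (hh : h ∈ HP) : h * t * h⁻¹ = t ∨ h * t * h⁻¹ = t * t := by
  have := chk_norm
  rw [fl_eq] at this
  simp only [sq_eq] at this
  rw [List.all_eq_true] at this
  have := this (enc h) (by rw [← HP_enc]; exact List.mem_map_of_mem hh)
  rw [Bool.or_eq_true, Nat.beq_eq, Nat.beq_eq, ← enc_t] at this
  simp only [← enc_mul] at this
  rcases this with h | h
  · left; rw [mul_inv_eq_iff_eq_mul]; exact enc_inj h
  · right; rw [mul_inv_eq_iff_eq_mul]; exact enc_inj h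

theorem abs_simple {A : Type*} [Group A] [Finite A] (S : Subgroup A) [S.Normal] (y : A)
    (hy : y * y = 1)
    (hgen : ∀ N : Subgroup A, (∀ s ∈ S, ∀ n ∈ N, s * n * s⁻¹ ∈ N) → (∀ n ∈ N, y * n * y⁻¹ ∈ N) → N.Normal)
    (hmin : ∀ N : Subgroup A, N.Normal → N ≠ ⊥ → S ≤ N)
    (hsq : ∀ m, Nat.card S ≠ m * m) (hS : S ≠ ⊥) : IsSimpleGroup S := by
  have hyi : y⁻¹ = y := inv_eq_of_mul_eq_one_right hy
  have : Nontrivial S := (Subgroup.nontrivial_iff_ne_bot S).2 hS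
  refine ⟨fun M hM => ?_⟩
  by_cases hMb : M = ⊥
  · exact Or.inl hMb
  right
  let M1 : Subgroup A := M.map S.subtype
  have hM1S : M1 ≤ S := Subgroup.map_subtype_le M
  have hM1b : M1 ≠ ⊥ := by
    intro h
    exact hMb ((Subgroup.map_eq_bot_iff_of_injective M S.subtype_injective).1 h)
  have hM1n : ∀ s ∈ S, ∀ m ∈ M1, s * m * s⁻¹ ∈ M1 := by
    rintro s hs _ ⟨m, hm, rfl⟩
    exact ⟨⟨s, hs⟩ * m * ⟨s, hs⟩⁻¹, hM.conj_mem m hm _, rfl⟩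
  let M2 : Subgroup A := M1.map (MulAut.conj y).toMonoidHom
  have mem2 : ∀ a, a ∈ M2 ↔ y * a * y⁻¹ ∈ M1 := by
    intro a
    constructor
    · rintro ⟨m, hm, rfl⟩
      have : y * ((MulAut.conj y).toMonoidHom m) * y⁻¹ = m := by
        simp only [MulEquiv.coe_toMonoidHom, MulAut.conj_apply, hyi]
        rw [show y * (y * m * y) * y = (y * y) * m * (y * y) by group, hy]; simp
      rw [this]; exact hm
    · intro h
      refine ⟨_, h, ?_⟩
      simp only [MulEquiv.coe_toMonoidHom, MulAut.conj_apply, hyi]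
      rw [show y * (y * a * y) * y = (y * y) * a * (y * y) by group, hy]; simp
  have mem2' : ∀ a, y * a * y⁻¹ ∈ M2 ↔ a ∈ M1 := by
    intro a
    rw [mem2, hyi, show y * (y * a * y) * y = (y * y) * a * (y * y) by group, hy]; simp
  have hM2S : M2 ≤ S := by
    intro a ha
    have := (inferInstance : S.Normal).conj_mem _ (hM1S ((mem2 a).1 ha)) y
    rwa [hyi, show y * (y * a * y) * y = (y * y) * a * (y * y) by group, hy, one_mul, mul_one] at this
  have hM2n : ∀ s ∈ S, ∀ m ∈ M2, s * m * s⁻¹ ∈ M2 := by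
    intro s hs m hm
    rw [mem2] at hm ⊢
    have := hM1n (y * s * y⁻¹) ((inferInstance : S.Normal).conj_mem _ hs y) _ hm
    rwa [show y * s * y⁻¹ * (y * m * y⁻¹) * (y * s * y⁻¹)⁻¹ = y * (s * m * s⁻¹) * y⁻¹ by group] at this
  have hinf : (M1 ⊓ M2).Normal := by
    apply hgen
    · intro s hs n hn
      exact ⟨hM1n s hs n hn.1, hM2n s hs n hn.2⟩
    · intro n hn
      exact ⟨(mem2 n).1 hn.2, (mem2' n).2 hn.1⟩
  by_cases hb : M1 ⊓ M2 = ⊥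
  · exfalso
    have hcomm : ∀ a ∈ M1, ∀ b ∈ M2, Commute a b := by
      intro a ha b hb'
      have h1 : a * b * a⁻¹ * b⁻¹ ∈ M1 ⊓ M2 := by
        constructor
        · have := M1.mul_mem ha (hM1n b (hM2S hb') _ (M1.inv_mem ha))
          rwa [show a * (b * a⁻¹ * b⁻¹) = a * b * a⁻¹ * b⁻¹ by group] at this
        · exact M2.mul_mem (hM2n a (hM1S ha) b hb') (M2.inv_mem hb')
      rw [hb, Subgroup.mem_bot, mul_inv_eq_one, mul_inv_eq_iff_eq_mul] at h1
      exact h1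
    have hcm : ∀ (m : M1) (n : M2), Commute (M1.subtype m) (M2.subtype n) :=
      fun m n => hcomm m m.2 n n.2
    let φ := MonoidHom.noncommCoprod M1.subtype M2.subtype hcm
    have hφ : Function.Injective φ := by
      refine (MonoidHom.noncommCoprod_injective _ _ _).2 ⟨M1.subtype_injective, M2.subtype_injective, ?_⟩
      rw [Subgroup.range_subtype, Subgroup.range_subtype, disjoint_iff]; exact hb
    have hr : φ.range = M1 ⊔ M2 := by
      refine (MonoidHom.noncommCoprod_range _ _ _).trans ?_
      rw [Subgroup.range_subtype, Subgroup.range_subtype]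
    have hnorm : (M1 ⊔ M2).Normal := by
      rw [← hr]
      apply hgen
      · rintro s hs _ ⟨⟨a, b⟩, rfl⟩
        refine ⟨(⟨_, hM1n s hs a a.2⟩, ⟨_, hM2n s hs b b.2⟩), ?_⟩
        simp [φ]
      · rintro _ ⟨⟨a, b⟩, rfl⟩
        refine ⟨(⟨_, (mem2 b).1 b.2⟩, ⟨_, (mem2' a).2 a.2⟩), ?_⟩
        have := (hcomm _ ((mem2 b).1 b.2) _ ((mem2' a).2 a.2)).eq
        simp only [φ, MonoidHom.noncommCoprod_apply, Subgroup.coe_subtype]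
        rw [this]; group
    have hSle : S ≤ M1 ⊔ M2 := hmin _ hnorm (fun h => hM1b (by
      rw [eq_bot_iff, ← h]; exact le_sup_left))
    have hSeq : S = φ.range := by rw [hr]; exact le_antisymm hSle (sup_le hM1S hM2S)
    have hc2 : Nat.card M2 = Nat.card M1 :=
      Nat.card_congr (M1.equivMapOfInjective _ (MulAut.conj y).injective).symm.toEquiv
    apply hsq (Nat.card M1)
    rw [hSeq, Nat.card_congr (MonoidHom.ofInjective hφ).symm.toEquiv, Nat.card_prod, hc2]
  · have hle : S ≤ M1 := (hmin _ hinf hb).trans inf_le_left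
    rw [eq_top_iff]
    intro s _
    obtain ⟨m, hm, e⟩ := hle s.2
    rw [← Subtype.ext e]; exact hm

def tG : G := ⟨t, ev_mem _⟩
def yG : G := ⟨y, y_mem⟩
def xG : G := ⟨x, x_mem⟩

abbrev S : Subgroup G := Subgroup.normalClosure {tG}

theorem tG_mem_S : tG ∈ S := Subgroup.subset_normalClosure (by simp)

theorem conj_stab {n w : G} (h : n • (0 : Fin 52) = w • (0 : Fin 52)) :
    n * tG * n⁻¹ = w * tG * w⁻¹ ∨ n * tG * n⁻¹ = w * (tG * tG) * w⁻¹ := by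
  have hh : ((w⁻¹ * n : G) : P) ∈ HP := by
    apply stab_HP (w⁻¹ * n).2
    change (w⁻¹ * n) • (0 : Fin 52) = 0
    rw [mul_smul, h, inv_smul_smul]
  rcases norm_t hh with e | e
  · left
    have e' : (w⁻¹ * n) * tG * (w⁻¹ * n)⁻¹ = tG := Subtype.ext e
    rw [show n * tG * n⁻¹ = w * ((w⁻¹ * n) * tG * (w⁻¹ * n)⁻¹) * w⁻¹ by group, e']
  · right
    have e' : (w⁻¹ * n) * tG * (w⁻¹ * n)⁻¹ = tG * tG := Subtype.ext e
    rw [show n * tG * n⁻¹ = w * ((w⁻¹ * n) * tG * (w⁻¹ * n)⁻¹) * w⁻¹ by group, e']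

def wb : G := ⟨ev [1, 1], ev_mem _⟩
def wc : G := ⟨ev [1, 2], ev_mem _⟩

theorem comm_bc : (wb * tG * wb⁻¹) * (wc * tG * wc⁻¹) =
    tG * (wc * tG * wc⁻¹) * (wb * tG * wb⁻¹) := by
  have hb : (ev [1, 1])⁻¹ = ev [1, 1] := inv_eq_of_mul_eq_one_right fact_b
  have hc : (ev [1, 2])⁻¹ = ev [0, 6, 7, 0] := inv_eq_of_mul_eq_one_right fact_c
  apply Subtype.ext
  have := fact_comm
  simp only [ev_append] at this
  simp only [Subgroup.coe_mul, Subgroup.coe_inv, wb, wc, tG, t, hb, hc]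
  exact this

theorem tG_val : (tG : P) = t := rfl
theorem yG_val : (yG : P) = y := rfl
theorem tG_ne : tG ≠ 1 := by
  intro h
  apply t_ne
  rw [← tG_val, h]
  exact Subgroup.coe_one _
theorem yGyG : yG * yG = 1 := by
  apply Subtype.ext
  rw [Subgroup.coe_mul, yG_val, yy]
  exact (Subgroup.coe_one _).symm

theorem min_normal (N : Subgroup G) (hN : N.Normal) (hb : N ≠ ⊥) : S ≤ N := by
  have hp := prim
  have hfix : MulAction.fixedPoints N (Fin 52) ≠ Set.univ := by
    intro h
    apply hb
    rw [eq_bot_iff]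
    intro n hn
    rw [Subgroup.mem_bot]
    apply Subtype.ext
    ext i
    have : i ∈ MulAction.fixedPoints N (Fin 52) := by rw [h]; trivial
    have := this ⟨n, hn⟩
    exact congrArg Fin.val this
  have htr : MulAction.IsPretransitive N (Fin 52) :=
    MulAction.IsQuasiPreprimitive.isPretransitive_of_normal hfix
  let π := QuotientGroup.mk' N
  have hπ : ∀ n ∈ N, π n = 1 := fun n hn => (QuotientGroup.eq_one_iff n).2 hn
  have t3' : tG * tG * tG = 1 := by
    apply Subtype.ext
    have := t3
    rw [pow_succ, pow_two] at this
    exact this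
  have key : ∀ w : G, π (w * tG * w⁻¹) = π tG ∨ π (w * tG * w⁻¹) = π tG * π tG := by
    intro w
    obtain ⟨n, hn⟩ := MulAction.exists_smul_eq N (0 : Fin 52) (w • (0 : Fin 52))
    have hn' : (n : G) • (0 : Fin 52) = w • (0 : Fin 52) := hn
    have e1 : π ((n : G) * tG * (n : G)⁻¹) = π tG := by
      simp [hπ n n.2]
    rcases conj_stab hn' with e | e
    · left; rw [← e, e1]
    · right
      have h2 : (w * tG * w⁻¹) = (w * (tG * tG) * w⁻¹) * (w * (tG * tG) * w⁻¹) := by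
        rw [show (w * (tG * tG) * w⁻¹) * (w * (tG * tG) * w⁻¹) = w * (tG * tG * tG) * tG * w⁻¹ by group,
          t3']; simp
      rw [h2, ← e, map_mul, e1]
  have hc := congrArg π comm_bc
  simp only [map_mul π _ (wb * tG * wb⁻¹), map_mul π _ (wc * tG * wc⁻¹)] at hc
  have htN : π tG = 1 := by
    have hcm : Commute (π (wb * tG * wb⁻¹)) (π (wc * tG * wc⁻¹)) := by
      rcases key wb with e | e <;> rcases key wc with e' | e' <;> rw [e, e'] <;>
        simp [Commute, SemiconjBy, mul_assoc]
    rw [mul_assoc (π tG), ← hcm.eq] at hc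
    exact (mul_eq_right.1 hc.symm)
  have : tG ∈ N := (QuotientGroup.eq_one_iff tG).1 htN
  exact Subgroup.normalClosure_le_normal (by simpa using this)

theorem xG_mem : xG ∈ S := by
  have hcj : ∀ w v : List ℕ, ev w * ev v = 1 → ∀ h : ev w * t * ev v ∈ G, (⟨ev w * t * ev v, h⟩ : G) ∈ S := by
    intro w v e h
    have e' : ev v = (ev w)⁻¹ := (inv_eq_of_mul_eq_one_right e).symm
    have := (inferInstance : S.Normal).conj_mem _ tG_mem_S ⟨ev w, ev_mem w⟩
    convert this using 1
    apply Subtype.ext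
    simp [e', tG]
  have hm : ∀ w v : List ℕ, ev w * t * ev v ∈ G := fun w v =>
    mul_mem (mul_mem (ev_mem _) (ev_mem _)) (ev_mem _)
  have := mul_mem (mul_mem (hcj _ _ fact_d (hm _ _)) (hcj _ _ fact_e (hm _ _))) (hcj _ _ fact_f (hm _ _))
  convert this using 1
  exact Subtype.ext fact_x

theorem gen_normal (N : Subgroup G) (h1 : ∀ s ∈ S, ∀ n ∈ N, s * n * s⁻¹ ∈ N)
    (h2 : ∀ n ∈ N, yG * n * yG⁻¹ ∈ N) : N.Normal := by
  refine ⟨fun n hn g => ?_⟩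
  have : ∀ g : P, g ∈ G → ∀ hg : g ∈ G, ∀ n ∈ N, (⟨g, hg⟩ : G) * n * (⟨g, hg⟩ : G)⁻¹ ∈ N := by
    refine G_ind ?_ ?_ ?_
    · intro hg n hn
      have : (⟨1, hg⟩ : G) = 1 := rfl
      rw [this]; simpa using hn
    · intro g ih hg n hn
      have hg' : g ∈ G := by
        have := mul_mem (inv_mem x_mem) hg; simpa using this
      have := h1 xG xG_mem _ (ih hg' n hn)
      have e : (⟨x * g, hg⟩ : G) = xG * ⟨g, hg'⟩ := rfl
      rw [e, mul_inv_rev]; simpa only [mul_assoc] using this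
    · intro g ih hg n hn
      have hg' : g ∈ G := by
        have := mul_mem (inv_mem y_mem) hg; simpa using this
      have := h2 _ (ih hg' n hn)
      have e : (⟨y * g, hg⟩ : G) = yG * ⟨g, hg'⟩ := rfl
      rw [e, mul_inv_rev]; simpa only [mul_assoc] using this
  exact this g g.2 g.2 n hn

theorem S_ne : S ≠ ⊥ := fun h => tG_ne (by
  have := tG_mem_S; rw [h] at this; exact this)

theorem S_card (m : ℕ) : Nat.card S ≠ m * m := by
  intro h
  have hp := prim
  have hfix : MulAction.fixedPoints S (Fin 52) ≠ Set.univ := by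
    intro h
    apply S_ne
    rw [eq_bot_iff]
    intro n hn
    rw [Subgroup.mem_bot]
    apply Subtype.ext
    ext i
    have : i ∈ MulAction.fixedPoints S (Fin 52) := by rw [h]; trivial
    exact congrArg Fin.val (this ⟨n, hn⟩)
  have htr : MulAction.IsPretransitive S (Fin 52) :=
    MulAction.IsQuasiPreprimitive.isPretransitive_of_normal hfix
  have h52 : 52 ∣ Nat.card S := by
    have := (MulAction.stabilizer S (0 : Fin 52)).index_dvd_card
    rw [MulAction.index_stabilizer_of_transitive] at this
    simpa using this
  have hd := S.card_subgroup_dvd_card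
  rw [card_G] at hd
  rw [h] at h52 hd
  have h13 : 13 ∣ m := by
    have : 13 ∣ m * m := dvd_trans (by norm_num) h52
    rcases (Nat.Prime.dvd_mul (by norm_num)).1 this with h | h <;> exact h
  have := dvd_trans (mul_dvd_mul h13 h13) hd
  norm_num at this

theorem S_simple : IsSimpleGroup S :=
  abs_simple S yG yGyG gen_normal min_normal S_card S_ne

theorem S_noncomm : (wb * tG * wb⁻¹) * (wc * tG * wc⁻¹) ≠ (wc * tG * wc⁻¹) * (wb * tG * wb⁻¹) := by
  intro h
  have := comm_bc
  rw [h, mul_assoc tG] at this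
  exact tG_ne (mul_eq_right.1 this.symm)

theorem tw_mem (w : G) : w * tG * w⁻¹ ∈ S := (inferInstance : S.Normal).conj_mem _ tG_mem_S w

theorem S_cent : Subgroup.centralizer (S : Set G) = ⊥ := by
  by_contra hb
  have hle := min_normal _ inferInstance hb
  have h1 := Subgroup.mem_centralizer_iff.1 (hle (tw_mem wc))
  exact S_noncomm (h1 _ (tw_mem wb))

theorem cyc {n : ℕ} (cs : List (List (Fin n))) (h1 : ∀ c ∈ cs, c.Nodup ∧ 2 ≤ c.length)
    (h2 : cs.Pairwise List.Disjoint) :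
    (permOfCycles cs).cycleType = ((cs.map List.length : List ℕ) : Multiset ℕ) := by
  rw [permOfCycles, Equiv.Perm.cycleType_eq (cs.map List.formPerm) rfl]
  · rw [List.map_map]
    congr 1
    apply List.map_congr_left
    intro c hc
    obtain ⟨hn, hl⟩ := h1 c hc
    simp only [Function.comp]
    rw [List.support_formPerm_of_nodup c hn (by rintro a rfl; simp at hl), List.toFinset_card_of_nodup hn]
  · intro s hs
    obtain ⟨c, hc, rfl⟩ := List.mem_map.1 hs
    exact List.isCycle_formPerm (h1 c hc).1 (h1 c hc).2
  · rw [List.pairwise_map]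
    refine h2.imp_of_mem ?_
    intro a b ha hb hab
    exact (List.formPerm_disjoint_iff (h1 a ha).1 (h1 b hb).1 (h1 a ha).2 (h1 b hb).2).2 hab

def cdis {n : ℕ} (cs : List (List (Fin n))) : Bool :=
  cs.all (fun c => decide (c.Nodup) && decide (2 ≤ c.length)) && decide cs.flatten.Nodup

theorem cyc' {n : ℕ} (cs : List (List (Fin n))) (h : cdis cs = true) :
    (permOfCycles cs).cycleType = ((cs.map List.length : List ℕ) : Multiset ℕ) := by
  simp only [cdis, Bool.and_eq_true, List.all_eq_true, decide_eq_true_eq] at h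
  exact cyc cs h.1 (List.nodup_flatten.1 h.2).2

theorem cx : x.cycleType = Multiset.replicate 5 8 + Multiset.replicate 3 4 := by
  refine (cyc' _ (by decide +kernel)).trans ?_
  decide +kernel

theorem cy : y.cycleType = Multiset.replicate 24 2 := by
  refine (cyc' _ (by decide +kernel)).trans ?_
  decide +kernel

def zz : P := permOfCycles [[0, 21, 14, 38], [1, 44, 31, 28], [2, 6], [3, 30, 10, 22],
  [4, 48, 36, 19], [5, 24, 23, 47], [7, 16, 50, 35], [9, 41, 20, 29], [12, 25, 26, 46],
  [13, 34, 42, 45], [17, 37], [18, 43], [27, 51, 40, 32], [39, 49]]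

def zc : ℕ := 5287367621358550867034586277860417353121832345882527851968215358803449340185497923426799086357
theorem enc_zz : enc zz = zc := by decide +kernel

theorem zz_eq : (x * y)⁻¹ = zz := by
  rw [z_eq]
  apply enc_inj
  rw [enc_ev, enc_zz]
  decide +kernel

theorem cz : ((x * y)⁻¹).cycleType = Multiset.replicate 10 4 + Multiset.replicate 4 2 := by
  rw [zz_eq]
  refine (cyc' _ (by decide +kernel)).trans ?_
  decide +kernel

theorem ind_of {s : P} {a b c d : ℕ}
    (h : s.cycleType = Multiset.replicate a b + Multiset.replicate c d) (r : ℕ)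
    (hr : a * b + c * d - (a + c) = r) : permInd s = r := by
  rw [permInd, h, Multiset.sum_add, Multiset.sum_replicate, Multiset.sum_replicate,
    Multiset.card_add, Multiset.card_replicate, Multiset.card_replicate, smul_eq_mul, smul_eq_mul, hr]

theorem ind_add (s u v : P) (h1 : s.cycleType = Multiset.replicate 5 8 + Multiset.replicate 3 4)
    (h2 : u.cycleType = Multiset.replicate 24 2)
    (h3 : v.cycleType = Multiset.replicate 10 4 + Multiset.replicate 4 2) :
    permInd s + permInd u + permInd v = 2 * (52 - 1) := by
  rw [ind_of h1 44 rfl, ind_of (a := 24) (b := 2) (c := 0) (d := 0) (h2.trans (add_zero _).symm) 24 rfl, ind_of h3 34 rfl]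

theorem ox : orderOf x = 8 := by
  rw [← Equiv.Perm.lcm_cycleType, cx]; decide +kernel
theorem oy : orderOf y = 2 := by
  rw [← Equiv.Perm.lcm_cycleType, cy]; decide +kernel
theorem oz : orderOf (x * y)⁻¹ = 4 := by
  rw [← Equiv.Perm.lcm_cycleType, cz]; decide +kernel

theorem red {A : Type*} [Group A] (g : A) (m : ℕ) (hm : orderOf g = m) (k : ℤ) (r : ℕ)
    (h : k % m = r) : g ^ k = g ^ r := by
  rw [← zpow_mod_orderOf, hm, h, zpow_natCast]

theorem ratx (k : ℤ) (hk : Int.gcd k (orderOf x) = 1) : ∃ h ∈ G, h * x * h⁻¹ = x ^ k := by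
  rw [ox] at hk
  have h4 : k % (8 : ℕ) = (1 : ℕ) ∨ k % (8 : ℕ) = (3 : ℕ) ∨ k % (8 : ℕ) = (5 : ℕ) ∨ k % (8 : ℕ) = (7 : ℕ) := by
    have h2 : ¬ (2 : ℤ) ∣ k := by
      intro h
      have := Int.dvd_gcd h (show (2 : ℤ) ∣ ((8 : ℕ) : ℤ) by norm_num)
      rw [hk] at this; norm_num at this
    omega
  rcases h4 with h | h | h | h <;> rw [red x 8 ox k _ h]
  · exact ⟨1, one_mem _, by simp⟩
  · exact ⟨_, ev_mem _, by rw [rat3, mul_inv_cancel_right]⟩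
  · exact ⟨_, ev_mem _, by rw [rat5, mul_inv_cancel_right]⟩
  · exact ⟨_, ev_mem _, by rw [rat7, mul_inv_cancel_right]⟩

theorem raty (k : ℤ) (hk : Int.gcd k (orderOf y) = 1) : ∃ h ∈ G, h * y * h⁻¹ = y ^ k := by
  rw [oy] at hk
  have h4 : k % (2 : ℕ) = (1 : ℕ) := by
    have h2 : ¬ (2 : ℤ) ∣ k := by
      intro h
      have := Int.dvd_gcd h (show (2 : ℤ) ∣ ((2 : ℕ) : ℤ) by norm_num)
      rw [hk] at this; norm_num at this
    omega
  rw [red y 2 oy k _ h4]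
  exact ⟨1, one_mem _, by simp⟩

theorem ratz' (k : ℤ) (hk : Int.gcd k (orderOf (x * y)⁻¹) = 1) :
    ∃ h ∈ G, h * (x * y)⁻¹ * h⁻¹ = ((x * y)⁻¹) ^ k := by
  rw [oz] at hk
  have h4 : k % (4 : ℕ) = (1 : ℕ) ∨ k % (4 : ℕ) = (3 : ℕ) := by
    have h2 : ¬ (2 : ℤ) ∣ k := by
      intro h
      have := Int.dvd_gcd h (show (2 : ℤ) ∣ ((4 : ℕ) : ℤ) by norm_num)
      rw [hk] at this; norm_num at this
    omega
  rcases h4 with h | h <;> rw [red _ 4 oz k _ h]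
  · exact ⟨1, one_mem _, by simp⟩
  · exact ⟨_, ev_mem _, by rw [z_eq, ratz, mul_inv_cancel_right]⟩

theorem x_inv : x⁻¹ = x ^ 7 := by
  rw [inv_eq_iff_mul_eq_one, ← pow_succ']; exact x8
theorem y_inv : y⁻¹ = y := by
  rw [inv_eq_iff_mul_eq_one]; exact yy

theorem Y_step {q : P} (hq : q ∈ YP) : x * q * x⁻¹ ∈ YP ∧ y * q * y⁻¹ ∈ YP := by
  have := chk_Yclosed
  rw [fl_eq, sq_eq, List.all_eq_true] at this
  have := this (enc q) (by rw [← YP_enc]; exact List.mem_map_of_mem hq)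
  simp only [sq_eq, Bool.and_eq_true] at this
  have h1 := mem_of_el this.1
  have h2 := mem_of_el this.2
  rw [← enc_x, ← enc_pow, ← enc_mul, ← enc_mul, ← YP_enc, mem_enc] at h1
  rw [← enc_y, ← enc_mul, ← enc_mul, ← YP_enc, mem_enc] at h2
  rw [x_inv, y_inv]
  exact ⟨h1, h2⟩

theorem Y_conj {g : P} (hg : g ∈ G) : g * y * g⁻¹ ∈ YP := by
  refine G_ind (Q := fun g => g * y * g⁻¹ ∈ YP) ?_ ?_ ?_ g hg
  · have := chk_y
    rw [fl_eq] at this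
    have h1 := mem_of_el this
    rw [← enc_y, ← YP_enc, mem_enc] at h1
    rw [one_mul, inv_one, mul_one]; exact h1
  · intro g h
    have := (Y_step h).1
    rwa [show x * g * y * (x * g)⁻¹ = x * (g * y * g⁻¹) * x⁻¹ by group]
  · intro g h
    have := (Y_step h).2
    rwa [show y * g * y * (y * g)⁻¹ = y * (g * y * g⁻¹) * y⁻¹ by group]

theorem Y_rig {q : P} (hq : q ∈ YP) (h4 : (x * q) ^ 4 = 1) (h2 : (x * q) ^ 2 ≠ 1) :
    ∃ k : ℕ, q = x ^ k * y * (x ^ k)⁻¹ := by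
  have := chk_rigid
  rw [fl_eq, fl_eq, List.all_eq_true] at this
  have := this (enc q) (by rw [← YP_enc]; exact List.mem_map_of_mem hq)
  simp only [sq_eq, Bool.or_eq_true, Bool.not_eq_true', Nat.beq_eq] at this
  rw [← enc_x, ← enc_mul, ← enc_mul, ← enc_mul, ← enc_one, ← enc_y, ← cj_enc] at this
  rcases this with h | h | h
  · exact absurd (by rw [pow_two]; exact enc_inj h) h2
  · exfalso
    rw [← Bool.not_eq_true, Nat.beq_eq] at h
    apply h
    have e : (x * q) * (x * q) * ((x * q) * (x * q)) = 1 := by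
      rw [← pow_two, ← pow_two, ← pow_mul]; exact h4
    rw [e]
  · have h := mem_enc.1 (mem_of_el h)
    simp only [cjP, List.mem_map, List.mem_range] at h
    obtain ⟨k, hk, rfl⟩ := h
    refine ⟨k, ?_⟩
    have : (x ^ k)⁻¹ = x ^ (8 - k) := by
      rw [inv_eq_iff_mul_eq_one, ← pow_add, Nat.add_sub_cancel' hk.le, x8]
    rw [this, mul_assoc]

theorem rigid (x' y' z' : P) (h : x' * y' * z' = 1) (h1 : ∃ g ∈ G, g * x * g⁻¹ = x')
    (h2 : ∃ g ∈ G, g * y * g⁻¹ = y') (h3 : ∃ g ∈ G, g * (x * y)⁻¹ * g⁻¹ = z') :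
    ∃ g ∈ G, g * x * g⁻¹ = x' ∧ g * y * g⁻¹ = y' ∧ g * (x * y)⁻¹ * g⁻¹ = z' := by
  obtain ⟨a, ha, rfl⟩ := h1
  obtain ⟨b, hb, rfl⟩ := h2
  obtain ⟨c, hc, rfl⟩ := h3
  have hq := Y_conj (mul_mem (inv_mem ha) hb)
  set q := (a⁻¹ * b) * y * (a⁻¹ * b)⁻¹ with hqd
  have hxq : x * q = (a⁻¹ * c) * ((x * y)⁻¹)⁻¹ * (a⁻¹ * c)⁻¹ := by
    rw [hqd]
    have h' := eq_inv_of_mul_eq_one_left h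
    have : x * (a⁻¹ * b * y * (a⁻¹ * b)⁻¹) = a⁻¹ * (a * x * a⁻¹ * (b * y * b⁻¹)) * a := by group
    rw [this, h']; group
  have e4 : (x * q) ^ 4 = 1 := by
    rw [hxq, conj_pow, inv_pow, z_eq, z4]; simp
  have e2 : (x * q) ^ 2 ≠ 1 := by
    rw [hxq, conj_pow, inv_pow, z_eq]
    intro h
    rw [conj_eq_one_iff, inv_eq_one] at h
    exact z2 h
  obtain ⟨k, hk⟩ := Y_rig hq e4 e2
  have ex : (a * x ^ k) * x * (a * x ^ k)⁻¹ = a * x * a⁻¹ := by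
    rw [show (a * x ^ k) * x * (a * x ^ k)⁻¹ = a * (x ^ k * x * (x ^ k)⁻¹) * a⁻¹ by
      simp only [mul_inv_rev, mul_assoc], ← pow_succ, pow_succ', mul_inv_cancel_right]
  have ey : (a * x ^ k) * y * (a * x ^ k)⁻¹ = b * y * b⁻¹ := by
    rw [show (a * x ^ k) * y * (a * x ^ k)⁻¹ = a * (x ^ k * y * (x ^ k)⁻¹) * a⁻¹ by
      simp only [mul_inv_rev, mul_assoc], ← hk, hqd]
    group
  refine ⟨a * x ^ k, mul_mem ha (pow_mem x_mem k), ex, ey, ?_⟩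
  have h' := eq_inv_of_mul_eq_one_right h
  rw [h', ← ex, ← ey]
  simp only [mul_inv_rev, mul_assoc, inv_inv, inv_mul_cancel_left]

theorem ne_top : G ≠ ⊤ := by
  intro h
  have := card_G
  rw [h, Subgroup.card_top, Nat.card_perm, Nat.card_fin] at this
  revert this
  decide +kernel

theorem ne_alt : G ≠ alternatingGroup (Fin 52) := by
  intro h
  have := card_G
  rw [h] at this
  have h2 := two_mul_nat_card_alternatingGroup (α := Fin 52)
  rw [this, Nat.card_perm, Nat.card_fin] at h2
  revert h2
  decide +kernel

theorem alm : ∃ S : Subgroup G, S.Normal ∧ IsSimpleGroup S ∧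
    (∃ a b : S, a * b ≠ b * a) ∧ Subgroup.centralizer (S : Set G) = ⊥ := by
  refine ⟨S, inferInstance, S_simple, ⟨⟨wb * tG * wb⁻¹, tw_mem wb⟩,
    ⟨wc * tG * wc⁻¹, tw_mem wc⟩, ?_⟩, S_cent⟩
  intro h
  apply S_noncomm
  have h' := congrArg (Subgroup.subtype S) h
  rw [map_mul, map_mul] at h'
  exact h'

theorem prim' : IsPreprimitive G (Fin 52) :=
  have hp := prim
  ⟨hp.toIsPretransitive, fun _ hB => hp.isTrivialBlock_of_isBlock hB⟩

theorem nice : IsNice x y (x * y)⁻¹ := by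
  refine ⟨mul_inv_cancel _, ⟨ne_alt, ne_top⟩, prim', alm, ind_add _ _ _ cx cy cz, ?_, ?_⟩
  · intro x' y' z' h _ h1 h2 h3
    exact rigid x' y' z' h h1 h2 h3
  · rintro g (rfl | rfl | rfl) k hk
    · exact ratx k hk
    · exact raty k hk
    · exact ratz' k hk


end N52

theorem nice_triple_deg52_stmt2 :
    IsNice x y (x * y)⁻¹ ∧
    x.cycleType = Multiset.replicate 5 8 + Multiset.replicate 3 4 ∧
    y.cycleType = Multiset.replicate 24 2 ∧
    ((x * y)⁻¹).cycleType = Multiset.replicate 10 4 + Multiset.replicate 4 2 ∧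
    Nat.card ↥(Subgroup.closure {x, y} : Subgroup (Equiv.Perm (Fin 52))) = 11232 := by
  exact ⟨N52.nice, N52.cx, N52.cy, N52.cz, N52.card_G⟩
end

section
/- With p, q ∈ ℚ[X] as in the context (the first Belyi map of degree 55 for PGL(2,11)), the polynomial F = p − t·q ∈ K[X] has degree 55, is irreducible over K = ℚ(t), and its Galois group Polynomial.Gal F (the Galois group of the splitting field of F over K) has cardinality 1320, the order of PGL(2,11). -/
open Polynomial

noncomputable section

def q : Polynomial ℚ :=
    11 ^ 4 * (2 * X + 1) * (176 * X ^ 3 + 1056 * X ^ 2 + 330 * X + 31) ^ 4 * (264 * X ^ 3 +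
    154 * X ^ 2 + 22 * X + 1) ^ 4 * (352 * X ^ 3 + 264 * X ^ 2 + 99 * X + 14) ^ 4 * (704 * X ^
    3 + 132 * X ^ 2 + 1) ^ 4 * (1408 * X ^ 3 + 693 * X ^ 2 + 132 * X + 8) ^ 2

def r : Polynomial ℚ :=
    -16 * (22 * X ^ 2 - 11 * X - 2) ^ 6 * (44 * X ^ 2 + 22 * X + 3) ^ 6 * (88 * X ^ 2 + 55 * X
    + 1) ^ 6 * (176 * X ^ 2 + 44 * X + 5) ^ 6 * (704 * X ^ 2 + 242 * X + 17) ^ 3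

def p : Polynomial ℚ := q + r

/-- `F = p − t·q ∈ K[X]` where `K = ℚ(t)` and `t = RatFunc.X`. -/
def F : Polynomial (RatFunc ℚ) :=
  p.map (algebraMap ℚ (RatFunc ℚ)) - Polynomial.C RatFunc.X * q.map (algebraMap ℚ (RatFunc ℚ))

end


namespace Bel
open Polynomial

section lists
variable {S : Type*} [CommRing S] {T : Type*} [CommRing T]

def evL : List ℤ → S → S
  | [], _ => 0
  | c :: l, x => (c : S) + x * evL l x
def bev : List (List ℤ) → S → S → S
  | [], _, _ => 0
  | r :: A, x, y => evL r x + y * bev A x y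

def addL : List ℤ → List ℤ → List ℤ
  | [], b => b
  | a :: s, [] => a :: s
  | a :: s, b :: t => (a + b) :: addL s t
def smulL (c : ℤ) : List ℤ → List ℤ
  | [] => []
  | a :: s => (c * a) :: smulL c s
def mulL : List ℤ → List ℤ → List ℤ
  | [], _ => []
  | a :: s, b => addL (smulL a b) (0 :: mulL s b)
def powL (l : List ℤ) : ℕ → List ℤ
  | 0 => [1]
  | n + 1 => mulL l (powL l n)
def addB : List (List ℤ) → List (List ℤ) → List (List ℤ)
  | [], b => b
  | a :: s, [] => a :: s
  | a :: s, b :: t => (addL a b) :: addB s t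
def smulB (c : List ℤ) : List (List ℤ) → List (List ℤ)
  | [] => []
  | a :: s => mulL c a :: smulB c s
def mulB : List (List ℤ) → List (List ℤ) → List (List ℤ)
  | [], _ => []
  | a :: s, b => addB (smulB a b) ([] :: mulB s b)
def yB : List ℤ → List (List ℤ)
  | [] => []
  | c :: l => [c] :: yB l
/-- symmetric matrix from its upper triangle -/
def sym : List (List ℤ) → List (List ℤ)
  | [] => []
  | r :: s => r :: List.zipWith (fun c t => c :: t) r.tail (sym s)

theorem evL_addL (x : S) : ∀ a b : List ℤ, evL (addL a b) x = evL a x + evL b x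
  | [], b => by simp [addL, evL]
  | a :: s, [] => by simp [addL, evL]
  | a :: s, b :: t => by simp only [addL, evL, evL_addL x s t]; push_cast; ring
theorem evL_smulL (x : S) (c : ℤ) : ∀ a : List ℤ, evL (smulL c a) x = c * evL a x
  | [] => by simp [smulL, evL]
  | a :: s => by simp only [smulL, evL, evL_smulL x c s]; push_cast; ring
theorem evL_mulL (x : S) (b : List ℤ) : ∀ a : List ℤ, evL (mulL a b) x = evL a x * evL b x
  | [] => by simp [mulL, evL]
  | a :: s => by simp only [mulL, evL, evL_addL, evL_smulL, evL_mulL x b s]; push_cast; ring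
theorem evL_powL (x : S) (l : List ℤ) : ∀ n, evL (powL l n) x = evL l x ^ n
  | 0 => by simp [powL, evL]
  | n + 1 => by simp only [powL, evL_mulL, evL_powL x l n]; ring
theorem bev_addB (x y : S) : ∀ a b : List (List ℤ), bev (addB a b) x y = bev a x y + bev b x y
  | [], b => by simp [addB, bev]
  | a :: s, [] => by simp [addB, bev]
  | a :: s, b :: t => by simp only [addB, bev, evL_addL, bev_addB x y s t]; ring
theorem bev_smulB (x y : S) (c : List ℤ) : ∀ a, bev (smulB c a) x y = evL c x * bev a x y
  | [] => by simp [smulB, bev]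
  | a :: s => by simp only [smulB, bev, evL_mulL, bev_smulB x y c s]; ring
theorem bev_mulB (x y : S) (b : List (List ℤ)) :
    ∀ a : List (List ℤ), bev (mulB a b) x y = bev a x y * bev b x y
  | [] => by simp [mulB, bev]
  | a :: s => by simp only [mulB, bev, evL, bev_addB, bev_smulB, bev_mulB x y b s]; ring
theorem bev_single (x y : S) (r : List ℤ) : bev [r] x y = evL r x := by simp [bev]
theorem bev_yB (x y : S) : ∀ l, bev (yB l) x y = evL l y
  | [] => rfl
  | c :: l => by simp [yB, bev, evL, bev_yB x y l]

theorem map_evL (φ : S →+* T) (x : S) : ∀ l, φ (evL l x) = evL l (φ x)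
  | [] => by simp [evL]
  | c :: l => by simp [evL, map_evL φ x l]
theorem map_bev (φ : S →+* T) (x y : S) : ∀ A, φ (bev A x y) = bev A (φ x) (φ y)
  | [] => by simp [bev]
  | c :: l => by simp [bev, map_evL, map_bev φ x y l]

def nL (w : ℤ) : List ℤ → ℤ
  | [] => 0
  | c :: l => |c| + w * nL w l
def nB (w : ℤ) : List (List ℤ) → ℤ
  | [] => 0
  | r :: A => nL w r + nB w A

variable {w : ℤ}
theorem nL_nonneg (hw : 0 ≤ w) : ∀ l, 0 ≤ nL w l
  | [] => le_rfl
  | c :: l => by have := nL_nonneg hw l; simp only [nL]; positivity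
theorem nB_nonneg (hw : 0 ≤ w) : ∀ l, 0 ≤ nB w l
  | [] => le_rfl
  | c :: l => add_nonneg (nL_nonneg hw c) (nB_nonneg hw l)
theorem nL_addL (hw : 0 ≤ w) : ∀ a b : List ℤ, nL w (addL a b) ≤ nL w a + nL w b
  | [], b => by simp [addL, nL]
  | a :: s, [] => by simp [addL, nL]
  | a :: s, b :: t => by
    have h := mul_le_mul_of_nonneg_left (nL_addL hw s t) hw
    have := abs_add_le a b
    simp only [addL, nL]; linarith
theorem nL_smulL (c : ℤ) : ∀ a : List ℤ, nL w (smulL c a) = |c| * nL w a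
  | [] => by simp [smulL, nL]
  | a :: s => by simp only [smulL, nL, nL_smulL c s, abs_mul]; ring
theorem nL_mulL (hw : 0 ≤ w) (b : List ℤ) : ∀ a : List ℤ, nL w (mulL a b) ≤ nL w a * nL w b
  | [] => by simp [mulL, nL]
  | a :: s => by
    have h := mul_le_mul_of_nonneg_left (nL_mulL hw b s) hw
    have h2 := nL_addL hw (smulL a b) (0 :: mulL s b)
    simp only [mulL, nL, nL_smulL, abs_zero] at *
    linarith
theorem nL_powL (hw : 0 ≤ w) (l : List ℤ) : ∀ n, nL w (powL l n) ≤ nL w l ^ n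
  | 0 => by simp [powL, nL]
  | n + 1 => by
    have h := mul_le_mul_of_nonneg_left (nL_powL hw l n) (nL_nonneg hw l)
    have h2 := nL_mulL hw (powL l n) l
    simp only [powL, pow_succ']; linarith
theorem nB_addB (hw : 0 ≤ w) : ∀ a b, nB w (addB a b) ≤ nB w a + nB w b
  | [], b => by simp [addB, nB]
  | a :: s, [] => by simp [addB, nB]
  | a :: s, b :: t => by
    have h := nB_addB hw s t
    have := nL_addL hw a b
    simp only [addB, nB]; linarith
theorem nB_smulB (hw : 0 ≤ w) (c : List ℤ) : ∀ a, nB w (smulB c a) ≤ nL w c * nB w a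
  | [] => by simp [smulB, nB]
  | a :: s => by
    have h := nB_smulB hw c s
    have h2 := nL_mulL hw a c
    simp only [smulB, nB]; linarith
theorem nB_mulB (hw : 0 ≤ w) (b : List (List ℤ)) : ∀ a, nB w (mulB a b) ≤ nB w a * nB w b
  | [] => by simp [mulB, nB]
  | a :: s => by
    have h := nB_mulB hw b s
    have h2 := nB_smulB hw a b
    have h3 := nB_addB hw (smulB a b) ([] :: mulB s b)
    simp only [mulB, nB, nL] at *
    linarith
theorem nB_yB (w : ℤ) : ∀ l, nB w (yB l) = nL 1 l
  | [] => rfl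
  | c :: l => by simp [yB, nB, nL, nB_yB w l]

theorem abs_evL_le (hw : 0 ≤ w) : ∀ l, |evL l w| ≤ nL w l
  | [] => by simp [evL, nL]
  | c :: l => by
    have h := mul_le_mul_of_nonneg_left (abs_evL_le hw l) hw
    have h2 := abs_add_le c (w * evL l w)
    rw [abs_mul, abs_of_nonneg hw] at h2
    simp only [evL, nL, Int.cast_id]; linarith

theorem digit_zero {c X e : ℤ} (h : c + X * e = 0) (hc : |c| < X) : c = 0 ∧ e = 0 := by
  have hd : X ∣ c := ⟨-e, by linarith⟩
  have h0 : c = 0 := Int.eq_zero_of_abs_lt_dvd hd hc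
  subst h0
  refine ⟨rfl, ?_⟩
  have : X * e = 0 := by linarith
  rcases mul_eq_zero.1 this with h | h
  · simp [h] at hc
  · exact h

theorem evL_zero {X : ℤ} (x : S) : ∀ l, nL 1 l < X → evL l X = 0 → evL l x = 0
  | [], _, _ => rfl
  | c :: l, h1, h2 => by
    have hn := nL_nonneg (w := 1) zero_le_one l
    simp only [nL, evL, Int.cast_id] at h1 h2
    have ⟨h3, h4⟩ := digit_zero h2 (by linarith)
    have := evL_zero x l (by have := abs_nonneg c; linarith) h4
    simp [evL, h3, this]

theorem bev_zero {X Y : ℤ} (hX : 0 ≤ X) (x y : S) :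
    ∀ A, nB 1 A < X → nB X A < Y → bev A X Y = 0 → bev A x y = 0
  | [], _, _, _ => rfl
  | r :: A, h0, h1, h2 => by
    have hn := nB_nonneg (w := 1) zero_le_one A
    have hn' := nB_nonneg hX A
    have hr := nL_nonneg (w := 1) zero_le_one r
    have hr' := nL_nonneg hX r
    simp only [nB, bev] at h0 h1 h2
    have ⟨h3, h4⟩ := digit_zero h2 (by have := abs_evL_le hX r; linarith)
    have e1 := bev_zero hX x y A (by linarith) (by linarith) h4
    have e2 := evL_zero x r (by linarith) h3
    simp [bev, e1, e2]

end lists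

def qe {S : Type*} [CommRing S] (x : S) : S :=
  11 ^ 4 * (2 * x + 1) * (176 * x ^ 3 + 1056 * x ^ 2 + 330 * x + 31) ^ 4 * (264 * x ^ 3 +
    154 * x ^ 2 + 22 * x + 1) ^ 4 * (352 * x ^ 3 + 264 * x ^ 2 + 99 * x + 14) ^ 4 * (704 * x ^
    3 + 132 * x ^ 2 + 1) ^ 4 * (1408 * x ^ 3 + 693 * x ^ 2 + 132 * x + 8) ^ 2
def re {S : Type*} [CommRing S] (x : S) : S :=
  -16 * (22 * x ^ 2 - 11 * x - 2) ^ 6 * (44 * x ^ 2 + 22 * x + 3) ^ 6 * (88 * x ^ 2 + 55 * x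
    + 1) ^ 6 * (176 * x ^ 2 + 44 * x + 5) ^ 6 * (704 * x ^ 2 + 242 * x + 17) ^ 3

def QL : List ℤ := mulL [14641] (mulL [1, 2] (mulL (powL [31, 330, 1056, 176] 4)
  (mulL (powL [1, 22, 154, 264] 4) (mulL (powL [14, 99, 264, 352] 4)
  (mulL (powL [1, 0, 132, 704] 4) (powL [8, 132, 693, 1408] 2))))))
def RL : List ℤ := mulL [-16] (mulL (powL [-2, -11, 22] 6) (mulL (powL [3, 22, 44] 6)
  (mulL (powL [1, 55, 88] 6) (mulL (powL [5, 44, 176] 6) (powL [17, 242, 704] 3)))))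

theorem evL_QL {S : Type*} [CommRing S] (x : S) : evL QL x = qe x := by
  simp only [QL, evL_mulL, evL_powL, evL, qe]
  push_cast
  generalize h1 : 176 * x ^ 3 + 1056 * x ^ 2 + 330 * x + 31 = a1
  generalize h2 : 264 * x ^ 3 + 154 * x ^ 2 + 22 * x + 1 = a2
  generalize h3 : 352 * x ^ 3 + 264 * x ^ 2 + 99 * x + 14 = a3
  generalize h4 : 704 * x ^ 3 + 132 * x ^ 2 + 1 = a4
  generalize h5 : 1408 * x ^ 3 + 693 * x ^ 2 + 132 * x + 8 = a5
  rw [show 31 + x * (330 + x * (1056 + x * (176 + x * 0))) = a1 by rw [← h1]; ring,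
    show 1 + x * (22 + x * (154 + x * (264 + x * 0))) = a2 by rw [← h2]; ring,
    show 14 + x * (99 + x * (264 + x * (352 + x * 0))) = a3 by rw [← h3]; ring,
    show 1 + x * (0 + x * (132 + x * (704 + x * 0))) = a4 by rw [← h4]; ring,
    show 8 + x * (132 + x * (693 + x * (1408 + x * 0))) = a5 by rw [← h5]; ring]
  ring

theorem evL_RL {S : Type*} [CommRing S] (x : S) : evL RL x = re x := by
  simp only [RL, evL_mulL, evL_powL, evL, re]
  push_cast
  generalize h1 : 22 * x ^ 2 - 11 * x - 2 = a1
  generalize h2 : 44 * x ^ 2 + 22 * x + 3 = a2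
  generalize h3 : 88 * x ^ 2 + 55 * x + 1 = a3
  generalize h4 : 176 * x ^ 2 + 44 * x + 5 = a4
  generalize h5 : 704 * x ^ 2 + 242 * x + 17 = a5
  rw [show -2 + x * (-11 + x * (22 + x * 0)) = a1 by rw [← h1]; ring,
    show 3 + x * (22 + x * (44 + x * 0)) = a2 by rw [← h2]; ring,
    show 1 + x * (55 + x * (88 + x * 0)) = a3 by rw [← h3]; ring,
    show 5 + x * (44 + x * (176 + x * 0)) = a4 by rw [← h4]; ring,
    show 17 + x * (242 + x * (704 + x * 0)) = a5 by rw [← h5]; ring]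
  ring


theorem map_qe {S T : Type*} [CommRing S] [CommRing T] (φ : S →+* T) (x : S) :
    φ (qe x) = qe (φ x) := by rw [← evL_QL, map_evL, evL_QL]
theorem map_re {S T : Type*} [CommRing S] [CommRing T] (φ : S →+* T) (x : S) :
    φ (re x) = re (φ x) := by rw [← evL_RL, map_evL, evL_RL]

def A6 : List (List ℤ) := [[-13400, -224070, -1494372, -3877544, 4872912, 48531648, 76092544],
 [-224070, -2270367, 4560534, 168291156, 1028408040, 2877016032, 3249599232],
 [-1494372, 4560534, 478926954, 5037712548, 23735164464, 56225784384, 55712380416],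
 [-3877544, 168291156, 5037712548, 48544012264, 223828158048, 516114863616, 488646771712],
 [4872912, 1028408040, 23735164464, 223828158048, 1048363747200, 2449073392128, 2307147988992],
 [48531648, 2877016032, 56225784384, 516114863616, 2449073392128, 5843341633536, 5572849041408],
 [76092544, 3249599232, 55712380416, 488646771712, 2307147988992, 5572849041408, 5403974828032]]
def A12_0 : List (List ℤ) := sym [[-13838400, -670259370, -14310123256, -177819641384, -1425088748160, -7680538903488, -28041348504576, -67720576720896, -100238403403776, -69920466468864, 18698981081088, 65093333155840, 31441308090368],
  [-34422534509, -776766076108, -10183282700844, -86227062764304, -494499142268736, -1952655959434752, -5273274181908480, -9414645326118912, -10233112388370432, -5350272828178432, 174892276252672, 1037563166982144],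
  [-18449700713158, -254012030540796, -2259237702696216, -13655645624412528, -57259643478584448, -166378222501860864, -327106107856957440, -411048844460638208, -290365753695666176, -76421661024321536, 12191367212040192],
  [-3663402078599560, -34116871923440064, -216287690653504800, -954799904538600384, -2938236918771762432, -6172655037675743232, -8413116994119270400, -6667725667733864448, -2288965670890635264, 47554978486681600],
  [-332382646885608000, -2206275568625741184, -10218920787657648000, -33092538080096715264, -73430294863688902656, -106229662723576922112, -90109861376292814848, -34018838387031539712, -139098312073543680],
  [-15335780067296853120, -74459410086351654144, -253085174313704054784, -590070303576395440128, -897460850939838873600, -800107120145960140800, -316942581577851863040, -1247604860598091776],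
  [-378924045415272377856, -1349695224538752301056, -3294872346382577123328, -5236589879914428727296, -4859405419307654578176, -1987019900672683278336, 896470788197056512],
  [-5029086028083301527552, -12808689236830500913152, -21152589249007783378944, -20275202474067795640320, -8494020749693785473024, 13723653466579009536],
  [-33877725018949631508480, -57725777417657208668160, -56597388497881193250816, -24033561619641170657280, -16830895760898785280],
  [-100478103299464947302400, -99180031053712019423232, -41638366602591031263232, -63295676365773209600],
  [-95920120981581782319104, -37783918848773302779904, 178493807351480451072],
  [-12971024718446989410304, -167100585605641273344],
  [55700195201880424448]]
def A12_1 : List (List ℤ) := sym [[33345, 3705768, 183518654, 5176261200, 92719260480, 1121796405312, 9495866300448, 57156534412032, 244423705008384, 727805954574336, 1437551276519424, 1696090081067008, 906532129603584],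
  [348930131, 15083790051, 384604305096, 6381914592768, 72579217675008, 581927425025232, 3327964194278592, 13524777215279616, 38211568842095616, 71418605512781824, 79456432347021312, 39887413702557696],
  [577803729030, 13354156502412, 204797083668276, 2182243746190728, 16532174321739648, 89711289548889888, 346330177985212608, 928404844068359680, 1641713467276422144, 1721288210717442048, 811044078618673152],
  [282706862154948, 4019640628514148, 40127810433748488, 286969336749765648, 1476660516701233248, 5415194963573112960, 13780582682953549056, 23069936189596268544, 22799127517744005120, 10075265238942351360],
  [53311057381933560, 499754354319133056, 3375507373941529728, 16471885793954260032, 57399966538696070784, 138785728850070922752, 220243258616475426816, 205410528726103523328, 85152241696867614720],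
  [4415119211618121600, 28211915386995614208, 130654741209556557312, 432935580991470670080, 995687878003822248960, 1500521008404823646208, 1323776917217988575232, 515766911285556412416],
  [170924258477539835136, 752230404916556037120, 2372667789248138967552, 5197806657876149053440, 7455717679605310832640, 6242980746165458042880, 2295581173643313414144],
  [3150941690979075451392, 9473833898395147404288, 19805230221249660887040, 27117153428089642942464, 21650817481356906332160, 7564581365521494048768],
  [27197300987202989187072, 54380832595451787313152, 71333487515420973072384, 54636019223183567093760, 18317193325015078010880],
  [104296172501336222466048, 131691673097820351234048, 97527288113139965493248, 31787088670891305861120],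
  [161069353238659535470592, 116526964371310057095168, 37529272430794251436032],
  [83462470051863126343680, 27070294868113886281728],
  [9023431622704628760576]]
def A12_2 : List (List ℤ) := sym [[-28095424, -1752572976, -43185676512, -601109079164, -5335348015008, -31294892945448, -118730713298208, -259487591904288, -183959091866880, 345833480751616, 222861788160000, -1105966578647040, 30704402432],
  [-89415361728, -2008787524524, -27428545662276, -253468327883364, -1643608874461356, -7467915813125328, -22765712917614480, -41561016816920832, -33973432562023680, -4751404238186496, -23385855789711360, 10132452802560],
  [-43791690486852, -605515450774839, -5814167283092718, -40237522352844300, -202835908176055704, -725783393596295232, -1714524647460945408, -2333800273260850944, -1473258316940061696, -649665506182606848, 1409424184836096],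
  [-8411454267976210, -79220372238173232, -535738541739390792, -2718482499999037200, -10311958090843827264, -27272689948355322240, -43929522920677073152, -34743489304615719936, -12503374683372503040, 106627178325606400],
  [-681972148840679136, -4036040641548170640, -18412900595082873792, -69759029784445670592, -204055286108964098688, -379242601089564833280, -344393382971344582656, -120004110864745316352, 4708444426595205120],
  [-18026123004991271808, -54873493120707345216, -176827254655924211328, -665432839924659189504, -1643684842673765185536, -1757404795654465892352, -536937127895640637440, 120475522431870566400],
  [19252517948242571520, 479365413462430336512, 370480173253864210944, -2545078378443412297728, -4013100907003066982400, 132452731388032450560, 1656816435012650926080],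
  [4242696812619530107392, 9275920163045200051200, 4298783077700609642496, -2044496551860533624832, 9339655593757864624128, 10601845974004609843200],
  [22909449170101082738688, 10315159640541792976896, -9633652120571249295360, 25916858611832397496320, 36462193639553268449280],
  [-37439519785959558479872, -89587333492149561851904, 5430688114415260139520, 72663436467907644620800],
  [-177145412544987150680064, -50036537640468766261248, 84522514391798913171456],
  [-11040031871718163218432, 53472187393805207470080],
  [14259249971681388658688]]
def A12_3 : List (List ℤ) := sym [[14448, 1163888, 65085020, 1250843264, 11971652880, 61840552224, 153326710416, 36900942144, -518573529408, 76244450304, 4062283895296, 7108428980224, 3748096000000],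
  [18034544, 1362240572, 32700189984, 353953119432, 2006078582640, 6313299908784, 14964188138592, 58226929297152, 230044693681792, 500700637203712, 514365336905728, 197899468800000],
  [40716404531, 877687981038, 10345280962170, 73322436073260, 365828178965964, 1521936584882736, 5356238857409616, 13559658167509696, 20769350961289216, 16366725736413184, 5145386188800000],
  [17770484097619, 217145432092149, 1718444917790370, 9857820736187292, 43536616424439336, 142543194360646464, 313186498963457152, 411063440888280576, 281928362976387072, 85914756055040000],
  [2785695122923812, 23590245491476488, 142838749480526352, 630339116335858512, 1941915144475190016, 3864539922761506560, 4518021576473281536, 2852166680701476864, 1019831374577664000],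
  [209889420301881936, 1290819072049290432, 5516812620296116128, 15739851493098919296, 27937243275859230720, 28333991352175060992, 16992516742373179392, 9033365382160711680],
  [7744552366326152256, 30883132340656149312, 78206671675317664512, 114480681162914863104, 85335354348901257216, 51412927665267277824, 61113021740680740864],
  [109013222678289152256, 220668350915701320192, 182401782446687840256, -65405944964414275584, -320238197315469312, 317974461452057051136],
  [221612120729519376384, -508306131673532915712, -1525199532062759190528, -532925769212542058496, 1263611866356708802560],
  [-3069468558369318961152, -5259860141731587555328, -1321606529826848505856, 3747104040853774008320],
  [-6906256881570291908608, 970006240305474437120, 7899300410448496558080],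
  [8729739684367441068032, 10694437478761041494016],
  [7129624985840694329344]]
def colT : ℕ := 0xadb9694e15528ec4518a4a93725a6baa2b546dc66834c4db86475d4da8ea92a4aa2e5b11715363b126c869952d28c8aca9db5bad431c95c4a52aaae469a7586d2964b19b522ea4e3a9d721311952b2955c6a3298aaa4e572d6d48ac45d2d4452b6b55972192b9246e88dd55a755b24a536958a369434a761329712b514a095c8d14a5aa5b2aa8d8a332b65b2da72b4ecad2ae08aa6daaa395cb649522e3469b596a3aa226172276092c4d35638546ed8cdaab6adadab09891493b556a0715559b6431529234951a6ec724b5b91a6e58d4b186a95244ed34d852b15aecacb71229b4e284c962b182ab54c49caab8cc6957196a2765b5d6918ad6dc48852169b4944e9a5a8edaa46d495db2d85431a4d5a9074c70c725ae266caea295b236d236575c7196d1b1848d71c96364ba95965a945624aa32b561b52553950b1391c49c6eb96a8da6c99619694ca6ad4ab7112a849429b769724b23899b1d52c65db25b5d89195c31071a35d8928d2969b1b4eb8d4253ad44ed96c29d49830cb0d4ecb5a69531172371a95aaea52b95471b50869ba5b52b9542aa72546a28db2468c8a38d3324718b52ad52a535444b8ddb526ad7526e4964a9470a2a835472576d2937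0b36b55d49c665aad64d69c68c7486aa6da921724b2aaeb8aa4944eaa6c50c52476b55892b4cb6a354b8ada9192b459b5452c56c95372a4a064d6dc4cc85a85a6dd565aa26d3b5d29589d26cb1889371c763b2950a8928ed2a385a8cdaeb7656daa6051485229cb1c455b15b5a92b6acaa3adca9351b290b2466ca5264d515a6275caed4a54618594d58d55288a975c6ea9532e38a56aa48d3624ea2dab0d6db5208d989b922b2568d52da946e54ca25bb24a9a2dc8a0a8ab1a55575b96db0c48d4a236c66b8eb963724ae875da936ea314454313b1c88d31aaa4565b1c6596988d2563b4a36d4dc49a7138e94a456a74d8944593606ea4a995d8e46ecb0c85b8954edb225498dab626d846d6a4b226ab68d8e148bb2dae295c49b34c6ad4d03543528a46ebb1d94a5136ddb63a8c5148ac72aa486d2adb2d292c36d72ca5ab2a8e149396365b692b5866c522761294a6c54ba9c68d6ada5c26c4e25554d889cae44d4ae4b11b59ae98aa70a32b72ab1389c460ad2aec71389b4a326dadc49971b322b1a95ba8aaa88a546d91476995276c29d4eb523aa16624e996c6e055331aaa389d55b6db8ec3118caa5436db644d44908ea96332a90a74971a5116dd76d71551a36a72a96051caea50a4a98da91c965b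15aea25394a7238ed4d04da2eca6db196ac56395386ba9a50d70d88a8d3b108e155a74ab0a92a95a923b534e54db5628dca4a6e075525556991b34d6d1ada5616ad8a4adc554b246d83624948d1b296ad4a450a6a552b35589a8dd76a94865c6db961aa376ab5c69db12465a54ae15228c95584d38ec71b8a370aa4a292b658954dbb0c52bad58508ed71cb12515b49665a938ea92c6dbaab48ab4a6e032449b4c96dd91556d695b5db0caac4e49146544c82da6a2a528a5aeb71c46d75d31430c89bb2a49bb08a5a92c89a45b32a95c68a6ac4ad76c76225d4e58e8
def rts : List ℕ := [1, 11, 14, 15, 20, 23, 31, 35, 45, 52, 53, 62, 68, 71, 93, 96, 121, 126, 133, 141, 143, 147, 156, 176, 178, 182, 185, 218, 244, 251, 264, 270, 271, 272, 278, 300, 320, 321, 324, 340, 347, 360, 363, 364, 371, 375, 385, 394, 404, 421, 435, 441, 448, 451, 454]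

def DL : List (List ℤ) :=
  addB (mulB [RL] (yB QL)) (addB (mulB [[-1]] (mulB [QL] (yB RL)))
    (mulB [[0, -234256], [234256]] (mulB A6 (mulB (mulB A12_0 A12_1) (mulB A12_2 A12_3)))))

def nQ (w : ℤ) : ℤ := nL w [14641] * (nL w [1, 2] * (nL w [31, 330, 1056, 176] ^ 4 *
  (nL w [1, 22, 154, 264] ^ 4 * (nL w [14, 99, 264, 352] ^ 4 *
  (nL w [1, 0, 132, 704] ^ 4 * nL w [8, 132, 693, 1408] ^ 2)))))
def nR (w : ℤ) : ℤ := nL w [-16] * (nL w [-2, -11, 22] ^ 6 * (nL w [3, 22, 44] ^ 6 *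
  (nL w [1, 55, 88] ^ 6 * (nL w [5, 44, 176] ^ 6 * nL w [17, 242, 704] ^ 3))))

theorem mulL_le {w : ℤ} (hw : 0 ≤ w) {a b : List ℤ} {m n : ℤ} (ha : nL w a ≤ m) (hb : nL w b ≤ n) :
    nL w (mulL a b) ≤ m * n :=
  (nL_mulL hw b a).trans (mul_le_mul ha hb (nL_nonneg hw b) ((nL_nonneg hw a).trans ha))
theorem mulB_le {w : ℤ} (hw : 0 ≤ w) {a b : List (List ℤ)} {m n : ℤ}
    (ha : nB w a ≤ m) (hb : nB w b ≤ n) : nB w (mulB a b) ≤ m * n :=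
  (nB_mulB hw b a).trans (mul_le_mul ha hb (nB_nonneg hw b) ((nB_nonneg hw a).trans ha))
theorem addB_le {w : ℤ} (hw : 0 ≤ w) {a b : List (List ℤ)} {m n : ℤ}
    (ha : nB w a ≤ m) (hb : nB w b ≤ n) : nB w (addB a b) ≤ m + n :=
  (nB_addB hw a b).trans (add_le_add ha hb)

theorem nL_QL {w : ℤ} (hw : 0 ≤ w) : nL w QL ≤ nQ w :=
  mulL_le hw le_rfl (mulL_le hw le_rfl (mulL_le hw (nL_powL hw _ _) (mulL_le hw (nL_powL hw _ _)
    (mulL_le hw (nL_powL hw _ _) (mulL_le hw (nL_powL hw _ _) (nL_powL hw _ _))))))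
theorem nL_RL {w : ℤ} (hw : 0 ≤ w) : nL w RL ≤ nR w :=
  mulL_le hw le_rfl (mulL_le hw (nL_powL hw _ _) (mulL_le hw (nL_powL hw _ _)
    (mulL_le hw (nL_powL hw _ _) (mulL_le hw (nL_powL hw _ _) (nL_powL hw _ _)))))

def nD (w : ℤ) : ℤ := nB w [[0, -234256], [234256]] *
  (nB w A6 * ((nB w A12_0 * nB w A12_1) * (nB w A12_2 * nB w A12_3)))

theorem nB_DL {w : ℤ} (hw : 0 ≤ w) : nB w DL ≤ nR w * nQ 1 + (1 * (nQ w * nR 1) + nD w) := by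
  have h1 : nB w [RL] ≤ nR w := by simpa [nB] using nL_RL hw
  have h2 : nB w [QL] ≤ nQ w := by simpa [nB] using nL_QL hw
  have h3 : nB w (yB QL) ≤ nQ 1 := by rw [nB_yB]; exact nL_QL zero_le_one
  have h4 : nB w (yB RL) ≤ nR 1 := by rw [nB_yB]; exact nL_RL zero_le_one
  have h5 : nB w [[-1]] ≤ 1 := by simp [nB, nL]
  exact addB_le hw (mulB_le hw h1 h3) (addB_le hw (mulB_le hw h5 (mulB_le hw h2 h4))
    (mulB_le hw le_rfl (mulB_le hw le_rfl
      (mulB_le hw (mulB_le hw le_rfl le_rfl) (mulB_le hw le_rfl le_rfl)))))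

theorem bev_DL {S : Type*} [CommRing S] (x y : S) : bev DL x y =
    re x * qe y - qe x * re y - 234256 * (x - y) * (bev A6 x y *
      ((bev A12_0 x y * bev A12_1 x y) * (bev A12_2 x y * bev A12_3 x y))) := by
  simp only [DL, bev_addB, bev_mulB, bev_single, bev_yB, evL_QL, evL_RL]
  have h1 : evL [-1] x = -1 := by simp [evL]
  have h2 : bev [[0, -234256], [234256]] x y = - 234256 * (x - y) := by
    simp [bev, evL]; ring
  rw [h1, h2]; ring

def X0 : ℤ := 2 ^ 700
def Y0 : ℤ := 2 ^ 42000
set_option maxRecDepth 100000 in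
set_option exponentiation.threshold 100000 in
theorem bound1 : nR 1 * nQ 1 + (1 * (nQ 1 * nR 1) + nD 1) < X0 := by decide +kernel
set_option maxRecDepth 100000 in
set_option exponentiation.threshold 100000 in
theorem bound2 : nR X0 * nQ 1 + (1 * (nQ X0 * nR 1) + nD X0) < Y0 := by decide +kernel
set_option maxRecDepth 100000 in
set_option exponentiation.threshold 100000 in
theorem ident0 : re X0 * qe Y0 - qe X0 * re Y0 - 234256 * (X0 - Y0) * (bev A6 X0 Y0 *
      ((bev A12_0 X0 Y0 * bev A12_1 X0 Y0) * (bev A12_2 X0 Y0 * bev A12_3 X0 Y0))) = 0 := by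
  decide +kernel

theorem X0_nonneg : 0 ≤ X0 := by unfold X0; positivity

theorem ident {S : Type*} [CommRing S] (x y : S) :
    re x * qe y - qe x * re y = 234256 * (x - y) * (bev A6 x y *
      ((bev A12_0 x y * bev A12_1 x y) * (bev A12_2 x y * bev A12_3 x y))) := by
  have h := bev_zero X0_nonneg x y DL ((nB_DL zero_le_one).trans_lt bound1)
    ((nB_DL X0_nonneg).trans_lt bound2) (by rw [bev_DL]; exact ident0)
  rw [bev_DL] at h
  exact sub_eq_zero.1 h


def colN (i j : ℕ) : ℕ := (colT / 8 ^ (55 * i + j)) % 8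
def hm (l : List ℤ) (x : ℤ) : ℤ := l.foldr (fun c acc => (c + x * acc) % 461) 0
def hmN (l : List ℕ) (x : ℕ) : ℕ := l.foldr (fun c acc => (c + x * acc) % 461) 0
def rowm (A : List (List ℤ)) (x : ℤ) : List ℕ := A.map (fun r => (hm r x).toNat)
def As : List (List (List ℤ)) := [A6, A12_0, A12_1, A12_2, A12_3]
def chk1 (rows : List (List ℕ)) (y : ℕ) (c : ℕ) : Bool :=
  (rows.zipIdx).all (fun rk => (Nat.beq (rk.2 + 1) c) || Nat.blt 0 (hmN rk.1 y))
def chkRow (i : ℕ) (x : ℤ) : Bool :=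
  let rows := As.map (fun A => rowm A x)
  rts.zipIdx.all (fun yj => Nat.beq yj.2 i || chk1 rows yj.1 (colN i yj.2))

theorem hm_nonneg (l : List ℤ) (x : ℤ) : 0 ≤ hm l x := by
  cases l with
  | nil => exact le_rfl
  | cons c l => exact Int.emod_nonneg _ (by norm_num)

theorem hm_cast (x : ℤ) : ∀ l : List ℤ, ((hm l x : ℤ) : ZMod 461) = evL l (x : ZMod 461)
  | [] => by simp [hm, evL]
  | c :: l => by
    have h : hm (c :: l) x = (c + x * hm l x) % 461 := rfl
    have h2 : (((c + x * hm l x) % 461 : ℤ) : ZMod 461) = ((c + x * hm l x : ℤ) : ZMod 461) :=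
      ZMod.intCast_mod _ 461
    rw [h, h2]; push_cast; rw [hm_cast x l]; rfl

theorem hmN_cast (x : ℤ) (y : ℕ) : ∀ A : List (List ℤ),
    ((hmN (rowm A x) y : ℕ) : ZMod 461) = bev A (x : ZMod 461) (y : ZMod 461)
  | [] => by simp [hmN, rowm, bev]
  | r :: A => by
    have h : hmN (rowm (r :: A) x) y = ((hm r x).toNat + y * hmN (rowm A x) y) % 461 := rfl
    have h1 : (((hm r x).toNat : ℕ) : ZMod 461) = ((hm r x : ℤ) : ZMod 461) := by
      conv_rhs => rw [← Int.toNat_of_nonneg (hm_nonneg r x)]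
      rw [Int.cast_natCast]
    rw [h, ZMod.natCast_mod]; push_cast; rw [h1, hm_cast, hmN_cast x y A]; rfl

theorem hmN_lt (l : List ℕ) (x : ℕ) : hmN l x < 461 := by
  cases l with
  | nil => simp [hmN]
  | cons c l => exact Nat.mod_lt _ (by norm_num)

def rt (i : Fin 55) : ℕ := rts.getD i 0
def col (i j : Fin 55) : ℕ := colN i j
def AA (k : Fin 5) : List (List ℤ) := As.getD k []

set_option maxRecDepth 100000 in
theorem chkAll : rts.zipIdx.all (fun xi => chkRow xi.2 (xi.1 : ℤ)) = true := by decide +kernel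

theorem rts_len : rts.length = 55 := by decide +kernel
theorem rt_mem (i : Fin 55) : (rt i, (i : ℕ)) ∈ rts.zipIdx := by
  rw [List.mem_zipIdx_iff_getElem?]
  have h : (i : ℕ) < rts.length := by rw [rts_len]; exact i.2
  simp [rt, h]

theorem AA_ne (i j : Fin 55) (hij : i ≠ j) (k : Fin 5) (hk : (k : ℕ) + 1 ≠ col i j) :
    bev (AA k) ((rt i : ℕ) : ZMod 461) ((rt j : ℕ) : ZMod 461) ≠ 0 := by
  have h1 := List.all_eq_true.1 chkAll _ (rt_mem i)
  have h2 := List.all_eq_true.1 h1 _ (rt_mem j)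
  have h3 : chk1 (As.map (fun A => rowm A (rt i : ℤ))) (rt j) (col i j) = true := by
    rcases Bool.or_eq_true_iff.1 h2 with h | h
    · exact absurd (Fin.ext (Nat.eq_of_beq_eq_true h).symm) hij
    · exact h
  have h4 : (rowm (AA k) (rt i : ℤ), (k : ℕ)) ∈ (As.map (fun A => rowm A (rt i : ℤ))).zipIdx := by
    rw [List.mem_zipIdx_iff_getElem?]
    have h : (k : ℕ) < As.length := k.2
    simp [AA, h]
  have h5 := List.all_eq_true.1 h3 _ h4
  rcases Bool.or_eq_true_iff.1 h5 with h | h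
  · exact absurd (Nat.eq_of_beq_eq_true h) hk
  · have h6 : 0 < hmN (rowm (AA k) (rt i : ℤ)) (rt j) := Nat.le_of_ble_eq_true h
    have h7 := hmN_cast (rt i : ℤ) (rt j) (AA k)
    intro h0
    rw [Int.cast_natCast, h0, ZMod.natCast_eq_zero_iff] at h7
    exact absurd (Nat.le_of_dvd h6 h7) (not_le.2 (hmN_lt _ _))



def sgd (S : List ℕ) (w w' : ℕ) : Bool := S.any (fun s => !(Nat.beq (colN s w) (colN s w')))
def uniq (S : List ℕ) (w : ℕ) : Bool := (List.range 55).all (fun w' => Nat.beq w' w || sgd S w w')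
def two (S : List ℕ) : Bool :=
  let T := (List.range 55).filter (uniq S)
  (List.range 55).all (uniq (S ++ T))
def nbs (u : ℕ) : List ℕ := u :: (List.range 55).filter (fun j => Nat.beq (colN u j) 1)

theorem two_a : two [0, 10, 1] = true := by decide +kernel
theorem two_b : two (nbs 0 ++ nbs 10) = true := by decide +kernel
theorem two_c : two (nbs 0 ++ nbs 29) = true := by decide +kernel
theorem two_d : two (nbs 10 ++ nbs 29) = true := by decide +kernel
theorem col_diag : ∀ i, col i i = 0 := by decide +kernel
theorem card_nb : ∀ v, (Finset.univ.filter (fun k => col v k = 1)).card = 6 := by decide +kernel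
theorem card_cls : (Finset.univ.filter
  (fun k => col 0 k = col 0 1 ∧ col 10 k = col 10 1)).card = 4 := by decide +kernel
theorem tri : col 0 10 = 1 ∧ col 0 29 = 1 ∧ col 10 29 = 1 ∧ col 10 0 = 1 ∧ col 29 0 = 1
  ∧ col 29 10 = 1 := by decide +kernel

def Pres (π : Fin 55 → Fin 55) : Prop := ∀ i j, col (π i) (π j) = col i j

theorem uniq_fix {π : Fin 55 → Fin 55} (hp : Pres π) {S : List ℕ}
    (hS : ∀ s : Fin 55, (s : ℕ) ∈ S → π s = s) (hS' : ∀ s ∈ S, s < 55) {w : Fin 55}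
    (hw : uniq S w = true) : π w = w := by
  have h := List.all_eq_true.1 hw (π w : ℕ) (List.mem_range.2 (π w).2)
  rcases Bool.or_eq_true_iff.1 h with h | h
  · exact Fin.ext (Nat.eq_of_beq_eq_true h)
  · obtain ⟨s, hs, h⟩ := List.any_eq_true.1 h
    have h1 := hp ⟨s, hS' s hs⟩ w
    rw [hS ⟨s, hS' s hs⟩ hs] at h1
    simp only [col] at h1
    rw [h1] at h
    simp at h

theorem two_fix {π : Fin 55 → Fin 55} (hp : Pres π) {S : List ℕ}
    (hS : ∀ s : Fin 55, (s : ℕ) ∈ S → π s = s) (hS' : ∀ s ∈ S, s < 55)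
    (h2 : two S = true) (w : Fin 55) : π w = w := by
  have h := List.all_eq_true.1 h2 (w : ℕ) (List.mem_range.2 w.2)
  refine uniq_fix hp (S := S ++ (List.range 55).filter (uniq S)) ?_ ?_ h
  · intro s hs
    rcases List.mem_append.1 hs with hs | hs
    · exact hS s hs
    · exact uniq_fix hp hS hS' (List.mem_filter.1 hs).2
  · intro s hs
    rcases List.mem_append.1 hs with hs | hs
    · exact hS' s hs
    · exact List.mem_range.1 (List.mem_filter.1 hs).1

theorem nbs_lt {u : ℕ} (hu : u < 55) : ∀ s ∈ nbs u, s < 55 := by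
  intro s hs
  rcases List.mem_cons.1 hs with rfl | hs
  · exact hu
  · exact List.mem_range.1 (List.mem_filter.1 hs).1

theorem nbs_fix {π : Fin 55 → Fin 55} {u : Fin 55} (h0 : π u = u)
    (h1 : ∀ j, col u j = 1 → π j = j) (s : Fin 55) (hs : (s : ℕ) ∈ nbs u) : π s = s := by
  rcases List.mem_cons.1 hs with hs | hs
  · rw [Fin.ext hs]; exact h0
  · exact h1 s (Nat.eq_of_beq_eq_true (List.mem_filter.1 hs).2)

theorem fix3 {π : Fin 55 → Fin 55} (hp : Pres π) (h0 : π 0 = 0) (h10 : π 10 = 10)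
    (h1 : π 1 = 1) (w : Fin 55) : π w = w := by
  refine two_fix hp (S := [0, 10, 1]) ?_ (by decide) two_a w
  intro s hs
  simp only [List.mem_cons, List.not_mem_nil, or_false] at hs
  rcases hs with hs | hs | hs
  · rw [show s = 0 from Fin.ext hs]; exact h0
  · rw [show s = 10 from Fin.ext hs]; exact h10
  · rw [show s = 1 from Fin.ext hs]; exact h1

theorem fixnb {π : Fin 55 → Fin 55} (hp : Pres π) {u v : Fin 55}
    (h : two (nbs u ++ nbs v) = true) (hu : π u = u) (hv : π v = v)
    (h1 : ∀ j, col u j = 1 → π j = j) (h2 : ∀ j, col v j = 1 → π j = j) (w : Fin 55) :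
    π w = w := by
  refine two_fix hp (S := nbs u ++ nbs v) ?_ ?_ h w
  · intro s hs
    rcases List.mem_append.1 hs with hs | hs
    · exact nbs_fix hu h1 s hs
    · exact nbs_fix hv h2 s hs
  · intro s hs
    rcases List.mem_append.1 hs with hs | hs
    · exact nbs_lt u.2 s hs
    · exact nbs_lt v.2 s hs


def UL : List ℤ := [
  -79965558282603263474787, -6547534464786313070596271, -149387701517527646649957206,
  -1662495197916975986459584832, -10482304794349523464897282088, -37284323219880499065583071440,
  -60566286719584050731871490880, 22068049546730604075992810752, 210192756278733126330898487296,
  191733546345830132516545429504]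
def VL : List ℤ := [
  -544423871944379350125856, -26796240252481841564430304, -663100913740982693999290147,
  -11624583164563022581187483498, -162942131290634925260462835998,
  -1825600482164581822989185015768, -15798516049610916155129899875792,
  -103303050386366262341730662888640, -505888349165127812753095914888288,
  -1845236627380175289380251061368064, -4963930012860376011662251872612608,
  -9645124855438245887557623981741056, -12976951172102328080637948516794368,
  -11089508161285179362656215141548032, -4942077453805629773519270137298944,
  -589005454374390167090827559436288]
def NN : ℤ := 15756334434937779726096
def Q0 : List ℤ := mulL [1, 2] (mulL [31, 330, 1056, 176] (mulL [1, 22, 154, 264]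
  (mulL [14, 99, 264, 352] (mulL [1, 0, 132, 704] [8, 132, 693, 1408]))))
def R0 : List ℤ := mulL [-2, -11, 22] (mulL [3, 22, 44] (mulL [1, 55, 88] (mulL [5, 44, 176]
  [17, 242, 704])))
set_option maxRecDepth 10000 in
theorem bez0 : addL (mulL UL Q0) (mulL VL R0) = NN :: List.replicate 25 0 := by decide +kernel
theorem NN_ne : NN ≠ 0 := by decide +kernel

theorem evL_rep {S : Type*} [CommRing S] (x : S) : ∀ n, evL (List.replicate n 0) x = 0
  | 0 => rfl
  | n + 1 => by simp [List.replicate_succ, evL, evL_rep x n]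

theorem bez {S : Type*} [CommRing S] (x : S) :
    evL UL x * evL Q0 x + evL VL x * evL R0 x = NN := by
  rw [← evL_mulL, ← evL_mulL, ← evL_addL, bez0, evL, evL_rep]; simp

theorem nocommon {S : Type*} [Field S] [CharZero S] (x : S) (hq : qe x = 0) (hr : re x = 0) :
    False := by
  have h1 : evL Q0 x = 0 := by
    rw [← evL_QL] at hq
    simp only [QL, Q0, evL_mulL, evL_powL, mul_eq_zero, pow_eq_zero_iff, ne_eq, not_false_eq_true,
      OfNat.ofNat_ne_zero] at hq ⊢
    rcases hq with h | h
    · simp [evL] at h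
    · exact h
  have h2 : evL R0 x = 0 := by
    rw [← evL_RL] at hr
    simp only [RL, R0, evL_mulL, evL_powL, mul_eq_zero, pow_eq_zero_iff, ne_eq, not_false_eq_true,
      OfNat.ofNat_ne_zero] at hr ⊢
    rcases hr with h | h
    · simp [evL] at h
    · exact h
  have := bez x
  rw [h1, h2] at this
  simp at this
  exact NN_ne (by exact_mod_cast this.symm)

theorem q_eq : q = qe (X : ℚ[X]) := rfl
theorem r_eq : r = re (X : ℚ[X]) := rfl

theorem aeval_q {A : Type*} [CommRing A] [Algebra ℚ A] (a : A) : aeval a q = qe a := by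
  rw [q_eq]; exact (map_qe (aeval a : ℚ[X] →ₐ[ℚ] A).toRingHom X).trans (by simp)
theorem aeval_r {A : Type*} [CommRing A] [Algebra ℚ A] (a : A) : aeval a r = re a := by
  rw [r_eq]; exact (map_re (aeval a : ℚ[X] →ₐ[ℚ] A).toRingHom X).trans (by simp)

theorem coprime_qr : IsCoprime q r := by
  refine (Polynomial.isCoprime_iff_aeval_ne_zero_of_isAlgClosed ℚ (AlgebraicClosure ℚ) q r).2
    fun a => ?_
  rw [aeval_q, aeval_r]
  by_contra h
  push Not at h
  exact nocommon a h.1 h.2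

theorem coeff_evL {S : Type*} [CommRing S] : ∀ (l : List ℤ) (n : ℕ),
    (evL l (X : S[X])).coeff n = ((l.getD n 0 : ℤ) : S)
  | [], n => by simp [evL]
  | c :: l, 0 => by simp [evL]
  | c :: l, n + 1 => by
    rw [evL, ← map_intCast (C : S →+* S[X]), coeff_add, coeff_X_mul, coeff_evL l n,
      coeff_C, if_neg (Nat.succ_ne_zero n), zero_add, List.getD_cons_succ]

/-- generic version of `F` -/
noncomputable def fpol {S : Type*} [CommRing S] (t : S) : S[X] := qe X + re X - C t * qe X

theorem F_eq : F = fpol (RatFunc.X : RatFunc ℚ) := by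
  have h1 : q.map (algebraMap ℚ (RatFunc ℚ)) = qe X := by
    rw [q_eq]; exact (map_qe (mapRingHom (algebraMap ℚ (RatFunc ℚ))) X).trans (by simp)
  have h2 : r.map (algebraMap ℚ (RatFunc ℚ)) = re X := by
    rw [r_eq]; exact (map_re (mapRingHom (algebraMap ℚ (RatFunc ℚ))) X).trans (by simp)
  rw [F, p, Polynomial.map_add, h1, h2, fpol]

theorem fpol_eval₂ {S T : Type*} [CommRing S] [CommRing T] (φ : S →+* T) (t : S) (x : T) :
    (fpol t).eval₂ φ x = qe x + re x - φ t * qe x := by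
  have h1 : (qe X : S[X]).eval₂ φ x = qe x := (map_qe (eval₂RingHom φ x) X).trans (by simp)
  have h2 : (re X : S[X]).eval₂ φ x = re x := (map_re (eval₂RingHom φ x) X).trans (by simp)
  rw [fpol, eval₂_sub, eval₂_add, eval₂_mul, eval₂_C, h1, h2]

theorem QL_len : QL.length = 56 := by decide +kernel
theorem RL_len : RL.length = 55 := by decide +kernel
theorem QL_55 : QL.getD 55 0 = 11 ^ 4 * 2 * 176 ^ 4 * 264 ^ 4 * 352 ^ 4 * 704 ^ 4 * 1408 ^ 2 := by
  decide +kernel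

theorem fpol_coeff {S : Type*} [CommRing S] (t : S) (n : ℕ) :
    (fpol t).coeff n = (QL.getD n 0 : ℤ) + (RL.getD n 0 : ℤ) - t * (QL.getD n 0 : ℤ) := by
  rw [fpol, coeff_sub, coeff_add, coeff_C_mul, ← evL_QL, ← evL_RL, coeff_evL, coeff_evL]

theorem fpol_natDegree_le {S : Type*} [CommRing S] (t : S) : (fpol t).natDegree ≤ 55 := by
  rw [natDegree_le_iff_coeff_eq_zero]
  intro n hn
  rw [fpol_coeff, List.getD_eq_default _ _ (by rw [QL_len]; omega),
    List.getD_eq_default _ _ (by rw [RL_len]; omega)]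
  simp
theorem fpol_coeff55 {S : Type*} [CommRing S] (t : S) : (fpol t).coeff 55 =
    (1 - t) * (QL.getD 55 0 : ℤ) := by
  rw [fpol_coeff, List.getD_eq_default RL _ (by rw [RL_len])]
  push_cast; ring

theorem RX_ne : (1 : RatFunc ℚ) - RatFunc.X ≠ 0 := by
  intro h
  have h1 : (algebraMap ℚ[X] (RatFunc ℚ)) (1 - X) = 0 := by
    rw [map_sub, map_one, RatFunc.algebraMap_X]; exact h
  have h2 := (map_eq_zero_iff _ (RatFunc.algebraMap_injective ℚ)).1 h1
  have := congrArg (fun f => coeff f 1) h2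
  simp [coeff_X, coeff_one] at this

theorem F_natDegree : F.natDegree = 55 := by
  rw [F_eq]
  refine natDegree_eq_of_le_of_coeff_ne_zero (fpol_natDegree_le _) ?_
  rw [fpol_coeff55]
  refine mul_ne_zero RX_ne ?_
  rw [QL_55]; norm_num

theorem F_irr : Irreducible F := by
  -- bivariate model
  let P : ℚ[X][X] := C (q + r) - X * C q
  have hq0 : q ≠ 0 := by
    intro h
    have h1 : q.coeff 55 = 0 := by rw [h]; simp
    rw [q_eq, ← evL_QL, coeff_evL, QL_55] at h1
    norm_num at h1
  have c0 : P.coeff 0 = q + r := by simp [P]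
  have c1 : P.coeff 1 = - q := by simp [P, coeff_C]
  have hdeg : P.degree = 1 := by
    have : P = C (-q) * X + C (q + r) := by simp [P]; ring
    rw [this, degree_linear (by simpa using hq0)]
  have hP : Irreducible P := by
    refine irreducible_of_degree_eq_one_of_isRelPrime_coeff hdeg ?_
    rw [c0, c1]
    have h : IsCoprime (q + r) q := by
      have := coprime_qr.symm.add_mul_left_left 1
      rwa [mul_one, add_comm] at this
    exact h.neg_right.isRelPrime
  have hS : Irreducible (Bivariate.swap P) := (MulEquiv.irreducible_iff (Bivariate.swap (R := ℚ))).2 hP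
  have hmap : (Bivariate.swap P).map (algebraMap ℚ[X] (RatFunc ℚ)) = F := by
    simp only [P, map_sub, map_mul, Bivariate.swap_C, Bivariate.swap_Y, Polynomial.map_sub,
      Polynomial.map_mul, Polynomial.map_map, map_C, RatFunc.algebraMap_X, F, p]
    have : (algebraMap ℚ[X] (RatFunc ℚ)).comp C = algebraMap ℚ (RatFunc ℚ) := by
      ext; simp
    rw [this]
  have hn : (Bivariate.swap P).natDegree ≠ 0 := by
    intro h
    have := natDegree_map_le (f := algebraMap ℚ[X] (RatFunc ℚ)) (p := Bivariate.swap P)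
    rw [hmap, F_natDegree, h] at this
    omega
  rw [← hmap]
  exact ((hS.isPrimitive hn).irreducible_iff_irreducible_map_fraction_map).1 hS


theorem res_iff {l : ℕ} [Fact l.Prime] (x y : ℤ_[l]) :
    PadicInt.toZMod x = PadicInt.toZMod y ↔ ‖x - y‖ < 1 := by
  rw [← PadicInt.mem_nonunits, ← IsLocalRing.mem_maximalIdeal, ← PadicInt.ker_toZMod,
    RingHom.mem_ker, map_sub, sub_eq_zero]

theorem exists_tau (l : ℕ) [Fact l.Prime] (t0 : ℤ) : ∃ τ : ℤ_[l],
    PadicInt.toZMod τ = (t0 : ZMod l) ∧ Transcendental ℚ (τ : ℚ_[l]) := by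
  have hc : Set.Countable {x : ℚ_[l] | IsAlgebraic ℚ x} := Algebraic.countable ℚ ℚ_[l]
  have hd := Set.Countable.dense_compl ℚ_[l] hc
  obtain ⟨x, hx, hx2⟩ := hd.exists_mem_open (Metric.isOpen_ball (x := (t0 : ℚ_[l])) (ε := 1))
    ⟨_, Metric.mem_ball_self one_pos⟩
  rw [Metric.mem_ball, dist_eq_norm] at hx2
  have h1 : ‖x‖ ≤ 1 := by
    have := Padic.nonarchimedean (x - (t0 : ℚ_[l])) (t0 : ℚ_[l])
    rw [sub_add_cancel] at this
    exact this.trans (max_le hx2.le (Padic.norm_int_le_one t0))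
  let τ : ℤ_[l] := ⟨x, h1⟩
  refine ⟨τ, ?_, hx⟩
  rw [← map_intCast (PadicInt.toZMod (p := l)) t0, res_iff, PadicInt.norm_def]
  simpa using hx2

theorem decomp (l : ℕ) [Fact l.Prime] (t0 : ℤ) : ∃ (τ : ℤ_[l])
    (ψ : F.SplittingField →+* AlgebraicClosure ℚ_[l]),
    PadicInt.toZMod τ = (t0 : ZMod l) ∧
    (∀ y, (qe y + re y - algebraMap ℚ_[l] (AlgebraicClosure ℚ_[l]) τ * qe y = 0) ↔
      ∃ x, F.aeval x = 0 ∧ ψ x = y) ∧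
    ∀ θ : AlgebraicClosure ℚ_[l] ≃ₐ[ℚ_[l]] AlgebraicClosure ℚ_[l], ∃ σ : F.Gal,
      ∀ x, ψ (σ x) = θ (ψ x) := by
  obtain ⟨τ, h0, htr⟩ := exists_tau l t0
  have hinj : Function.Injective (aeval (τ : ℚ_[l]) : ℚ[X] →ₐ[ℚ] ℚ_[l]) :=
    transcendental_iff_injective.1 htr
  let ι : RatFunc ℚ →+* ℚ_[l] := RatFunc.liftRingHom (aeval (τ : ℚ_[l]) : ℚ[X] →ₐ[ℚ] ℚ_[l]).toRingHom
    (nonZeroDivisors_le_comap_nonZeroDivisors_of_injective _ hinj)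
  have hι : ι RatFunc.X = τ := by
    rw [← RatFunc.algebraMap_X]
    exact (RatFunc.liftRingHom_algebraMap _ _ X).trans (by simp)
  let _ : Algebra (RatFunc ℚ) ℚ_[l] := ι.toAlgebra
  have hsp : ((F.map (algebraMap (RatFunc ℚ) (AlgebraicClosure ℚ_[l])))).Splits :=
    IsAlgClosed.splits _
  let ψ : F.SplittingField →ₐ[RatFunc ℚ] AlgebraicClosure ℚ_[l] := SplittingField.lift F hsp
  refine ⟨τ, ψ, h0, ?_, ?_⟩
  · intro y
    have key : F.aeval y = qe y + re y - algebraMap ℚ_[l] (AlgebraicClosure ℚ_[l]) τ * qe y := by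
      rw [aeval_def, F_eq, fpol_eval₂, IsScalarTower.algebraMap_apply (RatFunc ℚ) ℚ_[l], ← hι]
      rfl
    rw [← key]
    constructor
    · intro hy
      have hF : F ≠ 0 := F_irr.ne_zero
      have hm : y ∈ F.rootSet (AlgebraicClosure ℚ_[l]) := by
        rw [mem_rootSet]; exact ⟨hF, hy⟩
      rw [← (SplittingField.splits F).image_rootSet ψ] at hm
      obtain ⟨x, hx, rfl⟩ := hm
      exact ⟨x, (mem_rootSet.1 hx).2, rfl⟩
    · rintro ⟨x, hx, rfl⟩
      change aeval (ψ x) F = 0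
      rw [aeval_algHom_apply, hx, map_zero]
  · intro θ
    let _ : Algebra F.SplittingField (AlgebraicClosure ℚ_[l]) := ψ.toRingHom.toAlgebra
    have _ : IsScalarTower (RatFunc ℚ) F.SplittingField (AlgebraicClosure ℚ_[l]) :=
      IsScalarTower.of_algebraMap_eq (fun x => (ψ.commutes x).symm)
    refine ⟨(θ.restrictScalars (RatFunc ℚ)).restrictNormal F.SplittingField, fun x => ?_⟩
    exact (θ.restrictScalars (RatFunc ℚ)).restrictNormal_commutes F.SplittingField x


def f0 (t x : ℤ) : ℤ := qe x + re x - t * qe x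

theorem fpol_map {S T : Type*} [CommRing S] [CommRing T] (φ : S →+* T) (t : S) :
    (fpol t).map φ = fpol (φ t) := by
  have h1 : (qe X : S[X]).map φ = qe X := (map_qe (mapRingHom φ) X).trans (by simp)
  have h2 : (re X : S[X]).map φ = re X := (map_re (mapRingHom φ) X).trans (by simp)
  rw [fpol, Polynomial.map_sub, Polynomial.map_add, Polynomial.map_mul, map_C, h1, h2, fpol]

theorem fpol_eval {S : Type*} [CommRing S] (t x : S) :
    (fpol t).eval x = qe x + re x - t * qe x := fpol_eval₂ (RingHom.id S) t x

theorem der_int {l t c : ℤ} (h : ¬ l ^ 2 ∣ f0 t (c + l) - f0 t c) :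
    ¬ l ∣ (fpol t).derivative.eval c := by
  intro hd
  obtain ⟨k, hk⟩ := (fpol t).binomExpansion c l
  rw [fpol_eval, fpol_eval] at hk
  obtain ⟨d, hd⟩ := hd
  apply h
  refine ⟨d + k, ?_⟩
  simp only [f0] 
  rw [hk, hd]; ring

section
variable {l : ℕ} [Fact l.Prime] {τ : ℤ_[l]} {t c : ℤ}

theorem red_eval (ht : PadicInt.toZMod τ = (t : ZMod l)) {z : ℤ_[l]}
    (hz : PadicInt.toZMod z = (c : ZMod l)) :
    PadicInt.toZMod ((fpol τ).eval z) = ((f0 t c : ℤ) : ZMod l) := by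
  rw [fpol_eval, f0]
  simp only [map_sub, map_add, map_mul, map_qe, map_re, ht, hz]
  push_cast
  have h1 : ((qe c : ℤ) : ZMod l) = qe (c : ZMod l) := map_qe (Int.castRingHom (ZMod l)) c
  have h2 : ((re c : ℤ) : ZMod l) = re (c : ZMod l) := map_re (Int.castRingHom (ZMod l)) c
  rw [h1, h2]

theorem red_der (ht : PadicInt.toZMod τ = (t : ZMod l)) {z : ℤ_[l]}
    (hz : PadicInt.toZMod z = (c : ZMod l)) :
    PadicInt.toZMod ((fpol τ).derivative.eval z) = (((fpol t).derivative.eval c : ℤ) : ZMod l) := by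
  have h1 : PadicInt.toZMod ((fpol τ).derivative.eval z) =
      ((fpol τ).derivative.map PadicInt.toZMod).eval (PadicInt.toZMod z) := by
    rw [eval_map, eval₂_at_apply]
  have h2 : (((fpol t).derivative.eval c : ℤ) : ZMod l) =
      ((fpol t).derivative.map (Int.castRingHom (ZMod l))).eval (c : ZMod l) := by
    exact (eval_intCast_map (Int.castRingHom (ZMod l)) _ c).symm
  rw [h1, h2, ← derivative_map, ← derivative_map, fpol_map, fpol_map, ht, hz]
  simp

theorem hensel (ht : PadicInt.toZMod τ = (t : ZMod l)) (h0 : (l : ℤ) ∣ f0 t c)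
    (h1 : ¬ (l : ℤ) ^ 2 ∣ f0 t (c + l) - f0 t c) :
    ∃ z : ℤ_[l], (fpol τ).eval z = 0 ∧ PadicInt.toZMod z = (c : ZMod l) ∧
      ∀ z', (fpol τ).eval z' = 0 → PadicInt.toZMod z' = (c : ZMod l) → z' = z := by
  have hc : PadicInt.toZMod (c : ℤ_[l]) = (c : ZMod l) := map_intCast _ c
  have e1 : ‖(fpol τ).eval (c : ℤ_[l])‖ < 1 := by
    have := (res_iff ((fpol τ).eval (c : ℤ_[l])) 0).1 (by
      rw [red_eval ht hc, map_zero, ZMod.intCast_zmod_eq_zero_iff_dvd]; exact h0)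
    simpa using this
  have e2 : ‖(fpol τ).derivative.eval (c : ℤ_[l])‖ = 1 := by
    refine le_antisymm (PadicInt.norm_le_one _) (not_lt.1 fun h => der_int h1 ?_)
    have := (res_iff ((fpol τ).derivative.eval (c : ℤ_[l])) 0).2 (by simpa using h)
    rwa [red_der ht hc, map_zero, ZMod.intCast_zmod_eq_zero_iff_dvd] at this
  obtain ⟨z, hz, hz2, -, hz4⟩ := hensels_lemma (F := fpol τ) (a := (c : ℤ_[l])) (by
    simp only [coe_aeval_eq_eval]; rw [e2]; simpa using e1)
  simp only [coe_aeval_eq_eval, e2] at hz hz2 hz4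
  refine ⟨z, hz, ?_, fun z' h h' => hz4 z' h ?_⟩
  · rw [← hc, res_iff]; exact hz2
  · rw [← res_iff, hc]; exact h'
end

def chkRts : Bool := rts.all (fun c => decide ((461 : ℤ) ∣ f0 102 c) &&
  !decide ((461 : ℤ) ^ 2 ∣ f0 102 (c + 461) - f0 102 c))
set_option maxRecDepth 10000 in
theorem chkRts_true : chkRts = true := by decide +kernel
set_option maxRecDepth 10000 in
theorem chk29 : ∀ c : Fin 29, (29 : ℤ) ∣ f0 9 (c : ℕ) →
  ¬ (29 : ℤ) ^ 2 ∣ f0 9 ((c : ℕ) + 29) - f0 9 (c : ℕ) := by decide +kernel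
theorem chk29' : ∀ c ∈ ([6, 0, 2, 9, 16, 23, 28] : List ℕ), (29 : ℤ) ∣ f0 9 c := by decide +kernel
theorem chk29'' : ∀ c ∈ ([0, 2, 9, 16, 23, 28] : List ℕ), ∀ k : Fin 5, k ≠ 0 →
  ¬ (29 : ℤ) ∣ bev (AA k) (6 : ℤ) (c : ℤ) := by decide +kernel
theorem chk13 : (13 : ℤ) ∣ f0 3 12 ∧ ¬ (13 : ℤ) ^ 2 ∣ f0 3 (12 + 13) - f0 3 12 := by
  decide +kernel


abbrev LL := F.SplittingField
abbrev Om (l : ℕ) [Fact l.Prime] := AlgebraicClosure ℚ_[l]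
noncomputable def ee (l : ℕ) [Fact l.Prime] : ℤ_[l] →+* Om l :=
  (algebraMap ℚ_[l] (Om l)).comp PadicInt.Coe.ringHom
theorem ee_apply (l : ℕ) [Fact l.Prime] (z : ℤ_[l]) :
    ee l z = algebraMap ℚ_[l] (Om l) (z : ℚ_[l]) := rfl
theorem ee_inj (l : ℕ) [Fact l.Prime] : Function.Injective (ee l) := by
  intro x y h
  exact Subtype.ext ((algebraMap ℚ_[l] (Om l)).injective h)

theorem exk {S : Type*} [CommRing S] [IsDomain S] [CharZero S] {τ x y : S}
    (hx : qe x + re x - τ * qe x = 0) (hy : qe y + re y - τ * qe y = 0) (hne : x ≠ y) :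
    ∃ k : Fin 5, bev (AA k) x y = 0 := by
  have h := ident x y
  have h0 : re x * qe y - qe x * re y = 0 := by linear_combination (qe y) * hx - qe x * hy
  rw [h0] at h
  have h2 : (234256 : S) * (x - y) ≠ 0 := mul_ne_zero (by norm_num) (sub_ne_zero.2 hne)
  rcases mul_eq_zero.1 h.symm with h | h
  · exact absurd h h2
  rcases mul_eq_zero.1 h with h | h
  · exact ⟨0, h⟩
  rcases mul_eq_zero.1 h with h | h
  · rcases mul_eq_zero.1 h with h | h
    · exact ⟨1, h⟩
    · exact ⟨2, h⟩
  · rcases mul_eq_zero.1 h with h | h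
    · exact ⟨3, h⟩
    · exact ⟨4, h⟩

theorem aeval_F {A : Type*} [CommRing A] [Algebra (RatFunc ℚ) A] (x : A) :
    F.aeval x = qe x + re x - algebraMap (RatFunc ℚ) A RatFunc.X * qe x := by
  rw [aeval_def, F_eq, fpol_eval₂]

theorem ee_root {l : ℕ} [Fact l.Prime] {τ z : ℤ_[l]} (h : (fpol τ).eval z = 0) :
    qe (ee l z) + re (ee l z) - algebraMap ℚ_[l] (Om l) τ * qe (ee l z) = 0 := by
  rw [fpol_eval] at h
  have := congrArg (ee l) h
  simp only [map_sub, map_add, map_mul, map_qe, map_re, map_zero] at this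
  exact this

/-- if two roots of `F` correspond to p-adic integers, vanishing of `bev` descends to the
residue field -/
theorem bev_red {l : ℕ} [Fact l.Prime] {ψ : LL →+* Om l} {x y : LL} {a b : ℤ_[l]}
    (hx : ψ x = ee l a) (hy : ψ y = ee l b) {A : List (List ℤ)} (h : bev A x y = 0) :
    bev A (PadicInt.toZMod a) (PadicInt.toZMod b) = 0 := by
  have h1 : ee l (bev A a b) = ee l 0 := by
    rw [map_bev, ← hx, ← hy, ← map_bev, h, map_zero, map_zero]
  have h2 := ee_inj l h1
  rw [← map_bev, h2, map_zero]

instance fact461 : Fact (Nat.Prime 461) := ⟨by norm_num⟩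
instance fact29 : Fact (Nat.Prime 29) := ⟨by norm_num⟩
instance fact13 : Fact (Nat.Prime 13) := ⟨by norm_num⟩

theorem rt_inj : ∀ i j, (rt i : ZMod 461) = (rt j : ZMod 461) → i = j := by
  have h : ∀ i j, rt i % 461 = rt j % 461 → i = j := by decide +kernel
  intro i j hij
  exact h i j ((ZMod.natCast_eq_natCast_iff _ _ _).1 hij)

theorem exists_rho : ∃ ρ : Fin 55 → LL, Function.Injective ρ ∧
    (∀ x, F.aeval x = 0 ↔ ∃ i, ρ i = x) ∧
    ∀ i j, i ≠ j → ∀ k : Fin 5, bev (AA k) (ρ i) (ρ j) = 0 ↔ (k : ℕ) + 1 = col i j := by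
  obtain ⟨τ, ψ, ht, hr, -⟩ := decomp 461 102
  have hz : ∀ i : Fin 55, ∃ z : ℤ_[461], (fpol τ).eval z = 0 ∧
      PadicInt.toZMod z = ((rt i : ℕ) : ZMod 461) := by
    intro i
    have hm : rt i ∈ rts := by
      have h : (i : ℕ) < rts.length := by rw [rts_len]; exact i.2
      simp only [rt]
      rw [List.getD_eq_getElem _ _ h]
      exact List.getElem_mem h
    have h := List.all_eq_true.1 chkRts_true _ hm
    rw [Bool.and_eq_true, decide_eq_true_iff, Bool.not_eq_true', decide_eq_false_iff_not] at h
    obtain ⟨z, h1, h2, -⟩ := hensel ht h.1 h.2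
    exact ⟨z, h1, by rw [h2]; simp⟩
  choose z hz1 hz2 using hz
  have hx : ∀ i, ∃ x : LL, F.aeval x = 0 ∧ ψ x = ee 461 (z i) := fun i =>
    (hr _).1 (ee_root (hz1 i))
  choose ρ hρ1 hρ2 using hx
  have hinj : Function.Injective ρ := by
    intro i j hij
    have h1 : ee 461 (z i) = ee 461 (z j) := by rw [← hρ2, ← hρ2, hij]
    have h2 := ee_inj 461 h1
    exact rt_inj i j (by rw [← hz2, ← hz2, h2])
  have himp : ∀ i j, i ≠ j → ∀ k : Fin 5, bev (AA k) (ρ i) (ρ j) = 0 →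
      (k : ℕ) + 1 = col i j := by
    intro i j hij k h
    by_contra hk
    have := bev_red (hρ2 i) (hρ2 j) h
    rw [hz2, hz2] at this
    exact AA_ne i j hij k hk this
  refine ⟨ρ, hinj, ?_, ?_⟩
  · classical
    have hF : F ≠ 0 := F_irr.ne_zero
    have hsub : Finset.univ.image ρ ⊆ (F.aroots LL).toFinset := by
      intro x hx
      obtain ⟨i, -, rfl⟩ := Finset.mem_image.1 hx
      rw [Multiset.mem_toFinset, mem_aroots]
      exact ⟨hF, hρ1 i⟩
    have hcard : (F.aroots LL).toFinset.card ≤ (Finset.univ.image ρ).card := by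
      rw [Finset.card_image_of_injective _ hinj, Finset.card_univ, Fintype.card_fin]
      refine (Multiset.toFinset_card_le _).trans ((card_roots' _).trans ?_)
      exact natDegree_map_le.trans F_natDegree.le
    have heq := Finset.eq_of_subset_of_card_le hsub hcard
    intro x
    constructor
    · intro hx
      have : x ∈ (F.aroots LL).toFinset := by
        rw [Multiset.mem_toFinset, mem_aroots]; exact ⟨hF, hx⟩
      rw [← heq] at this
      obtain ⟨i, -, h⟩ := Finset.mem_image.1 this
      exact ⟨i, h⟩
    · rintro ⟨i, rfl⟩
      exact hρ1 i
  · intro i j hij k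
    refine ⟨himp i j hij k, fun h => ?_⟩
    have hi := hρ1 i
    have hj := hρ1 j
    rw [aeval_F] at hi hj
    obtain ⟨k', hk'⟩ := exk hi hj (fun h => hij (hinj h))
    have h2 := himp i j hij k' hk'
    have : k = k' := Fin.ext (by omega)
    rw [this]; exact hk'

noncomputable def rho : Fin 55 → LL := exists_rho.choose
theorem rho_inj : Function.Injective rho := exists_rho.choose_spec.1
theorem rho_root (x : LL) : F.aeval x = 0 ↔ ∃ i, rho i = x := exists_rho.choose_spec.2.1 x
theorem rho_col (i j) (h : i ≠ j) (k : Fin 5) : bev (AA k) (rho i) (rho j) = 0 ↔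
    (k : ℕ) + 1 = col i j := exists_rho.choose_spec.2.2 i j h k

theorem exists_pi (σ : F.Gal) (i : Fin 55) : ∃ j, rho j = σ (rho i) := by
  rw [← rho_root]
  have h : F.aeval (rho i) = 0 := (rho_root _).2 ⟨i, rfl⟩
  let σ' : LL ≃ₐ[RatFunc ℚ] LL := σ
  have := aeval_algHom_apply σ'.toAlgHom (rho i) F
  rw [h, map_zero] at this
  exact this

noncomputable def act (σ : F.Gal) (i : Fin 55) : Fin 55 := (exists_pi σ i).choose
theorem rho_act (σ : F.Gal) (i : Fin 55) : rho (act σ i) = σ (rho i) := (exists_pi σ i).choose_spec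
theorem act_mul (σ τ : F.Gal) (i : Fin 55) : act (σ * τ) i = act σ (act τ i) := by
  apply rho_inj
  rw [rho_act, rho_act, rho_act]; rfl
theorem act_one (i : Fin 55) : act 1 i = i := by
  apply rho_inj
  rw [rho_act]; rfl
theorem act_inj (σ : F.Gal) : Function.Injective (act σ) := by
  intro i j h
  have := congrArg (act σ⁻¹) h
  rwa [← act_mul, ← act_mul, inv_mul_cancel, act_one, act_one] at this
theorem act_faithful (σ : F.Gal) (h : ∀ i, act σ i = i) : σ = 1 := by
  apply Gal.ext
  intro x hx
  obtain ⟨i, rfl⟩ := (rho_root x).1 (mem_rootSet.1 hx).2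
  rw [← rho_act, h]; rfl

theorem exists_color (i j) (h : i ≠ j) : ∃ k : Fin 5, (k : ℕ) + 1 = col i j := by
  have hi := (rho_root _).2 ⟨i, rfl⟩
  have hj := (rho_root _).2 ⟨j, rfl⟩
  rw [aeval_F] at hi hj
  obtain ⟨k, hk⟩ := exk hi hj (fun e => h (rho_inj e))
  exact ⟨k, (rho_col i j h k).1 hk⟩

theorem act_pres (σ : F.Gal) : Pres (act σ) := by
  intro i j
  by_cases h : i = j
  · rw [h, col_diag, col_diag]
  · obtain ⟨k, hk⟩ := exists_color i j h
    have h1 := (rho_col i j h k).2 hk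
    have h2 : bev (AA k) (rho (act σ i)) (rho (act σ j)) = 0 := by
      rw [rho_act, rho_act]
      have := map_bev (σ : LL →+* LL) (rho i) (rho j) (AA k)
      rw [h1, map_zero] at this
      exact this.symm
    rw [← hk, ((rho_col _ _ (fun e => h (act_inj σ e)) k).1 h2)]

theorem act_trans (i j : Fin 55) : ∃ σ : F.Gal, act σ i = j := by
  have hi := (rho_root _).2 ⟨i, rfl⟩
  have hj := (rho_root _).2 ⟨j, rfl⟩
  have h : IsConjRoot (RatFunc ℚ) (rho j) (rho i) := by
    have e1 := minpoly.eq_of_irreducible F_irr hi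
    have e2 := minpoly.eq_of_irreducible F_irr hj
    rw [IsConjRoot, ← e1, ← e2]
  obtain ⟨σ, hσ⟩ := isConjRoot_iff_exists_algEquiv.1 h
  let σ' : F.Gal := σ
  refine ⟨σ', rho_inj ?_⟩
  rw [rho_act, ← hσ]
  rfl

theorem d1 : ∀ a : ZMod 13, ¬ (a ^ 6 - 2 * a ^ 5 + 2 * a ^ 4 - 3 * a ^ 3 - 11 * a + 5 = 0) := by
  decide +kernel
theorem d2 : ∀ a b : ZMod 13, ∀ c, 2 = c + a → ∀ d, 2 = d + c * a + b → ∀ e, 3 = e + d * a + c * b →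
   ∀ f, 0 = f + e * a + d * b → 11 = f * a + e * b → 5 = f * b → False := by
  have : ∀ a b : ZMod 13, 11 = (0 - (3 - (2 - (2 - a) * a - b) * a - (2 - a) * b) * a - (2 - (2 - a) * a - b) * b) * a
      + (3 - (2 - (2 - a) * a - b) * a - (2 - a) * b) * b →
    5 = (0 - (3 - (2 - (2 - a) * a - b) * a - (2 - a) * b) * a - (2 - (2 - a) * a - b) * b) * b → False := by
    decide +kernel
  intro a b c hc d hd e he f hf h1 h2
  obtain rfl : c = 2 - a := by linear_combination -hc
  obtain rfl : d = 2 - (2 - a) * a - b := by linear_combination -hd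
  obtain rfl : e = 3 - (2 - (2 - a) * a - b) * a - (2 - a) * b := by linear_combination -he
  obtain rfl : f = 0 - (3 - (2 - (2 - a) * a - b) * a - (2 - a) * b) * a - (2 - (2 - a) * a - b) * b := by
    linear_combination -hf
  exact this a b h1 h2
theorem d3 : ∀ a b c : ZMod 13, ∀ d, 2 = d + a → ∀ e, 2 = e + d * a + b →
    ∀ f, 3 = f + e * a + d * b + c → 0 = f * a + e * b + d * c → 11 = f * b + e * c → 5 = f * c → False := by
  have : ∀ a b c : ZMod 13,
    0 = (3 - (2 - (2 - a) * a - b) * a - (2 - a) * b - c) * a + (2 - (2 - a) * a - b) * b + (2 - a) * c →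
    11 = (3 - (2 - (2 - a) * a - b) * a - (2 - a) * b - c) * b + (2 - (2 - a) * a - b) * c →
    5 = (3 - (2 - (2 - a) * a - b) * a - (2 - a) * b - c) * c → False := by
    decide +kernel
  intro a b c d hd e he f hf h1 h2
  obtain rfl : d = 2 - a := by linear_combination -hd
  obtain rfl : e = 2 - (2 - a) * a - b := by linear_combination -he
  obtain rfl : f = 3 - (2 - (2 - a) * a - b) * a - (2 - a) * b - c := by linear_combination -hf
  exact this a b c h1 h2

theorem irr13 (P : (ZMod 13)[X]) (hm : P.Monic) (hn : P.natDegree = 6) (h0 : P.coeff 0 = 5)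
    (h1 : P.coeff 1 = 11) (h2 : P.coeff 2 = 0) (h3 : P.coeff 3 = 3) (h4 : P.coeff 4 = 2)
    (h5 : P.coeff 5 = 2) : Irreducible P := by
  have hne1 : P ≠ 1 := by rintro rfl; simp at hn
  refine (hm.irreducible_iff_natDegree').2 ⟨hne1, ?_⟩
  intro f g hf hg hfg hmem
  rw [hn, Finset.mem_Ioc] at hmem
  have hd : f.natDegree + g.natDegree = 6 := by rw [← hf.natDegree_mul hg, hfg, hn]
  have cf : ∀ n, f.natDegree < n → f.coeff n = 0 := fun n h => coeff_eq_zero_of_natDegree_lt h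
  have cg : ∀ n, g.natDegree < n → g.coeff n = 0 := fun n h => coeff_eq_zero_of_natDegree_lt h
  have lf := hf.coeff_natDegree
  have lg := hg.coeff_natDegree
  have k0 := h0
  have k1 := h1
  have k2 := h2
  have k3 := h3
  have k4 := h4
  have k5 := h5
  have k6 : P.coeff 6 = 1 := by rw [← hn]; exact hm.coeff_natDegree
  rw [← hfg] at h0 h1 h2 h3 h4 h5
  simp only [coeff_mul, Finset.Nat.antidiagonal_succ, Finset.Nat.antidiagonal_zero,
    Finset.sum_cons, Finset.sum_map, Finset.map_singleton, Finset.sum_singleton, Finset.map_cons,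
    Finset.map_map, Function.Embedding.prodMap, Function.Embedding.coeFn_mk, Prod.map,
    Function.Embedding.refl_apply, Function.Embedding.trans_apply, Nat.succ_eq_add_one,
    Nat.reduceAdd, zero_add] at h0 h1 h2 h3 h4 h5
  obtain hk | hk | hk : g.natDegree = 1 ∨ g.natDegree = 2 ∨ g.natDegree = 3 := by omega
  · have hk' : f.natDegree = 5 := by omega
    have hr : g = X - C (- g.coeff 0) := by
      conv_lhs => rw [g.eq_X_add_C_of_natDegree_le_one hk.le]
      rw [hk] at lg; rw [lg]; simp
    have he : P.eval (-g.coeff 0) = 0 := by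
      rw [← hfg, eval_mul]; conv_lhs => rw [hr]
      simp
    have hP := hn.le
    rw [eval_eq_sum_range' (n := 7) (by omega)] at he
    simp only [Finset.sum_range_succ, Finset.sum_range_zero] at he
    rw [k0, k1, k2, k3, k4, k5, k6] at he
    exact d1 (g.coeff 0) (by linear_combination he)
  · have hk' : f.natDegree = 4 := by omega
    rw [hk] at lg cg
    rw [hk'] at lf cf
    simp only [lf, lg, cf 5 (by norm_num), cg 3 (by norm_num), cg 4 (by norm_num), cg 5 (by norm_num),
      mul_zero, zero_mul, add_zero, zero_add, mul_one, one_mul] at h0 h1 h2 h3 h4 h5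
    exact d2 (g.coeff 1) (g.coeff 0) (f.coeff 3) (by linear_combination -h5) (f.coeff 2)
      (by linear_combination -h4) (f.coeff 1) (by linear_combination -h3) (f.coeff 0)
      (by linear_combination -h2) (by linear_combination -h1) (by linear_combination -h0)
  · have hk' : f.natDegree = 3 := by omega
    rw [hk] at lg cg
    rw [hk'] at lf cf
    simp only [lf, lg, cf 5 (by norm_num), cf 4 (by norm_num), cg 4 (by norm_num), cg 5 (by norm_num),
      mul_zero, zero_mul, add_zero, zero_add, mul_one, one_mul] at h0 h1 h2 h3 h4 h5
    exact d3 (g.coeff 2) (g.coeff 1) (g.coeff 0) (f.coeff 2) (by linear_combination -h5) (f.coeff 1)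
      (by linear_combination -h4) (f.coeff 0) (by linear_combination -h3)
      (by linear_combination -h2) (by linear_combination -h1) (by linear_combination -h0)


theorem coeff_bev {S : Type*} [CommRing S] (z : S) : ∀ (A : List (List ℤ)) (n : ℕ),
    (bev A (C z) (X : S[X])).coeff n = evL (A.getD n []) z
  | [], n => by simp [bev, evL]
  | r :: A, 0 => by
    rw [bev, ← map_evL, coeff_add, coeff_C_zero, coeff_X_mul_zero, add_zero, List.getD_cons_zero]
  | r :: A, n + 1 => by
    rw [bev, ← map_evL, coeff_add, coeff_C, if_neg (Nat.succ_ne_zero n), coeff_X_mul, zero_add,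
      List.getD_cons_succ, coeff_bev z A n]

theorem A6_len : A6.length = 7 := by decide +kernel
theorem A6_13 : evL (A6.getD 0 []) (12 : ZMod 13) = 8 ∧ evL (A6.getD 1 []) (12 : ZMod 13) = 2 ∧
    evL (A6.getD 2 []) (12 : ZMod 13) = 0 ∧ evL (A6.getD 3 []) (12 : ZMod 13) = 10 ∧
    evL (A6.getD 4 []) (12 : ZMod 13) = 11 ∧ evL (A6.getD 5 []) (12 : ZMod 13) = 11 ∧
    evL (A6.getD 6 []) (12 : ZMod 13) = 12 := by
  have h : ∀ l : List ℤ, evL l (12 : ZMod 13) = ((evL l (12 : ℤ) : ℤ) : ZMod 13) := fun l =>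
    ((map_evL (Int.castRingHom (ZMod 13)) 12 l).trans (by simp)).symm
  simp only [h]
  decide +kernel

theorem unit_of_red {l : ℕ} [Fact l.Prime] {x : ℤ_[l]} (h : PadicInt.toZMod x ≠ 0) : IsUnit x := by
  rw [PadicInt.isUnit_iff]
  refine le_antisymm (PadicInt.norm_le_one _) (not_lt.1 fun h' => h ?_)
  have := (res_iff x 0).2 (by simpa using h')
  rw [this, map_zero]

theorem irrQ {z : ℤ_[13]} (hz : PadicInt.toZMod z = (12 : ZMod 13)) :
    ∃ h : ℚ_[13][X], Irreducible h ∧ ∃ u : ℤ_[13], h = (C u * bev A6 (C z) X).map (algebraMap ℤ_[13] ℚ_[13]) := by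
  set g : ℤ_[13][X] := bev A6 (C z) X with hg
  have hc : ∀ n, g.coeff n = evL (A6.getD n []) z := coeff_bev z A6
  have hr : ∀ n, PadicInt.toZMod (g.coeff n) = evL (A6.getD n []) (12 : ZMod 13) := by
    intro n; rw [hc, map_evL, hz]
  obtain ⟨a0, a1, a2, a3, a4, a5, a6⟩ := A6_13
  have hle : g.natDegree ≤ 6 := by
    rw [natDegree_le_iff_coeff_eq_zero]
    intro n hn
    rw [hc, List.getD_eq_default _ _ (by rw [A6_len]; omega)]; rfl
  have hu : IsUnit (g.coeff 6) := unit_of_red (by rw [hr, a6]; decide)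
  obtain ⟨u, hu⟩ := hu.exists_right_inv
  have hu' : PadicInt.toZMod u = (12 : ZMod 13) := by
    have := congrArg PadicInt.toZMod hu
    rw [map_mul, hr, a6, map_one] at this
    revert this
    generalize PadicInt.toZMod u = y
    revert y
    decide
  have hm : (C u * g).Monic := by
    refine monic_of_natDegree_le_of_coeff_eq_one 6 ((natDegree_C_mul_le _ _).trans hle) ?_
    rw [coeff_C_mul, mul_comm, hu]
  have hirr : Irreducible ((C u * g).map PadicInt.toZMod) := by
    have hm' := hm.map (PadicInt.toZMod (p := 13))
    have hcc : ∀ n, ((C u * g).map PadicInt.toZMod).coeff n = 12 * evL (A6.getD n []) (12 : ZMod 13) := by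
      intro n; rw [coeff_map, coeff_C_mul, map_mul, hr, hu']
    refine irr13 _ hm' ?_ ?_ ?_ ?_ ?_ ?_ ?_
    · refine natDegree_eq_of_le_of_coeff_ne_zero
        (natDegree_map_le.trans ((natDegree_C_mul_le _ _).trans hle)) ?_
      rw [hcc, a6]; decide
    · rw [hcc, a0]; decide
    · rw [hcc, a1]; decide
    · rw [hcc, a2]; decide
    · rw [hcc, a3]; decide
    · rw [hcc, a4]; decide
    · rw [hcc, a5]; decide
  have h1 := hm.irreducible_of_irreducible_map _ _ hirr
  exact ⟨_, (hm.irreducible_iff_irreducible_map_fraction_map (K := ℚ_[13])).1 h1, u, rfl⟩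

theorem col_ne {i j : Fin 55} (h : col i j = 1) : i ≠ j := by
  rintro rfl
  rw [col_diag] at h
  exact absurd h (by decide)

theorem H13 : ∃ v : Fin 55, ∀ w w' : Fin 55, col v w = 1 → col v w' = 1 →
    ∃ σ, act σ v = v ∧ act σ w = w' := by
  obtain ⟨τ, ψ, ht, hr, hD⟩ := decomp 13 3
  obtain ⟨z, hz, hz2, -⟩ := hensel (c := 12) ht chk13.1 chk13.2
  obtain ⟨x, hx, hxz⟩ := (hr _).1 (ee_root hz)
  obtain ⟨v, rfl⟩ := (rho_root x).1 hx
  obtain ⟨h, hirr, u, hu⟩ := irrQ (z := z) (by rw [hz2]; norm_num)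
  have key : ∀ w, col v w = 1 → h.aeval (ψ (rho w)) = 0 := by
    intro w hw
    have h1 := (rho_col v w (col_ne hw) 0).2 (by rw [hw]; rfl)
    have h2 : bev A6 (ee 13 z) (ψ (rho w)) = 0 := by
      rw [← hxz, ← map_bev]; rw [show A6 = AA 0 from rfl, h1, map_zero]
    rw [hu, aeval_def, eval₂_map, eval₂_mul]
    have h3 : eval₂ (ee 13) (ψ (rho w)) (bev A6 (C z) X) = 0 := by
      have := map_bev (eval₂RingHom (ee 13) (ψ (rho w))) (C z) X A6
      rw [coe_eval₂RingHom, eval₂_C, eval₂_X, h2] at this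
      exact this
    have h4 : ((algebraMap ℚ_[13] (AlgebraicClosure ℚ_[13])).comp (algebraMap ℤ_[13] ℚ_[13])) = ee 13 := rfl
    rw [h4, h3, mul_zero]
  refine ⟨v, fun w w' hw hw' => ?_⟩
  have hconj : IsConjRoot ℚ_[13] (ψ (rho w')) (ψ (rho w)) := by
    have e1 := minpoly.eq_of_irreducible hirr (key w hw)
    have e2 := minpoly.eq_of_irreducible hirr (key w' hw')
    rw [IsConjRoot, ← e1, ← e2]
  obtain ⟨θ, hθ⟩ := isConjRoot_iff_exists_algEquiv.1 hconj
  obtain ⟨σ, hσ⟩ := hD θ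
  refine ⟨σ, rho_inj (ψ.injective ?_), rho_inj (ψ.injective ?_)⟩
  · rw [rho_act, hσ, hxz, ee_apply, AlgEquiv.commutes]
  · rw [rho_act, hσ, hθ]

theorem act_inv_eq {σ : F.Gal} {i j : Fin 55} (h : act σ i = j) : act σ⁻¹ j = i := by
  rw [← h, ← act_mul, inv_mul_cancel, act_one]

theorem Hall (v w w' : Fin 55) (hw : col v w = 1) (hw' : col v w' = 1) :
    ∃ σ, act σ v = v ∧ act σ w = w' := by
  obtain ⟨v0, hv0⟩ := H13
  obtain ⟨g, hg⟩ := act_trans v v0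
  have e : ∀ w, col v w = 1 → col v0 (act g w) = 1 := by
    intro w hw; rw [← hg, act_pres, hw]
  obtain ⟨σ, h1, h2⟩ := hv0 _ _ (e w hw) (e w' hw')
  refine ⟨g⁻¹ * σ * g, ?_, ?_⟩
  · rw [act_mul, act_mul, hg, h1, act_inv_eq hg]
  · rw [act_mul, act_mul, h2, act_inv_eq rfl]


theorem QL55_29 : ¬ (29 : ℤ) ∣ (1 - 9) * QL.getD 55 0 := by rw [QL_55]; decide +kernel

theorem int_root {τ : ℤ_[29]} (ht : PadicInt.toZMod τ = ((9 : ℤ) : ZMod 29)) (a : ℚ_[29])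
    (ha : (fpol τ).aeval a = 0) : ∃ z : ℤ_[29], (z : ℚ_[29]) = a := by
  have hu : IsUnit ((fpol τ).coeff 55) := by
    refine unit_of_red ?_
    rw [fpol_coeff55, map_mul, map_sub, map_one, ht, map_intCast]
    intro h
    apply QL55_29
    have := (ZMod.intCast_zmod_eq_zero_iff_dvd ((1 - 9) * QL.getD 55 0) 29).1 (by
      push_cast; push_cast at h; exact h)
    exact this
  obtain ⟨u, hu⟩ := hu.exists_right_inv
  have hm : (C u * fpol τ).Monic := by
    refine monic_of_natDegree_le_of_coeff_eq_one 55
      ((natDegree_C_mul_le _ _).trans (fpol_natDegree_le _)) ?_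
    rw [coeff_C_mul, mul_comm, hu]
  have hi : IsIntegral ℤ_[29] a := ⟨_, hm, by
    rw [eval₂_mul, ← aeval_def, ← aeval_def, ha, mul_zero]⟩
  exact IsIntegrallyClosed.isIntegral_iff.1 hi

theorem K29 : ∃ (v : Fin 55) (σ : F.Gal), σ ≠ 1 ∧ act σ v = v ∧
    ∀ w, col v w = 1 → act σ w = w := by
  obtain ⟨τ, ψ, ht, hr, hD⟩ := decomp 29 9
  have hz : ∀ c : Fin 29, (29 : ℤ) ∣ f0 9 (c : ℕ) → ∃ z : ℤ_[29], (fpol τ).eval z = 0 ∧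
      PadicInt.toZMod z = (((c : ℕ) : ℤ) : ZMod 29) ∧
      ∀ z', (fpol τ).eval z' = 0 → PadicInt.toZMod z' = (((c : ℕ) : ℤ) : ZMod 29) → z' = z :=
    fun c hc => hensel ht hc (chk29 c hc)
  have hv : ∀ c : Fin 29, (c : ℕ) ∈ ([6, 0, 2, 9, 16, 23, 28] : List ℕ) → ∃ (v : Fin 55)
      (z : ℤ_[29]), ψ (rho v) = ee 29 z ∧ PadicInt.toZMod z = (((c : ℕ) : ℤ) : ZMod 29) := by
    intro c hc
    obtain ⟨z, h1, h2, -⟩ := hz c (chk29' c hc)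
    obtain ⟨x, hx, hxz⟩ := (hr _).1 (ee_root h1)
    obtain ⟨v, rfl⟩ := (rho_root x).1 hx
    exact ⟨v, z, hxz, h2⟩
  obtain ⟨v, z, hvz, hz6⟩ := hv 6 (by decide)
  -- the six neighbours
  let c6 : Fin 6 → Fin 29 := ![0, 2, 9, 16, 23, 28]
  have hc6 : ∀ i, (c6 i : ℕ) ∈ ([0, 2, 9, 16, 23, 28] : List ℕ) := by decide
  have hc6i : ∀ i j, (((c6 i : ℕ) : ℤ) : ZMod 29) = (((c6 j : ℕ) : ℤ) : ZMod 29) → i = j := by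
    decide
  have hc66 : ∀ i, (((c6 i : ℕ) : ℤ) : ZMod 29) ≠ ((((6 : Fin 29) : ℕ) : ℤ) : ZMod 29) := by
    decide
  choose w y hwy hy6 using fun i => hv (c6 i) (List.mem_cons_of_mem _ (hc6 i))
  have hwi : Function.Injective w := by
    intro i j hij
    have h1 : ee 29 (y i) = ee 29 (y j) := by rw [← hwy, ← hwy, hij]
    exact hc6i i j (by rw [← hy6, ← hy6, ee_inj 29 h1])
  have hwv : ∀ i, v ≠ w i := by
    intro i hij
    have h1 : ee 29 (y i) = ee 29 z := by rw [← hwy, ← hvz, hij]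
    exact hc66 i (by rw [← hy6, ← hz6, ee_inj 29 h1])
  have hcol : ∀ i, col v (w i) = 1 := by
    intro i
    obtain ⟨k, hk⟩ := exists_color v (w i) (hwv i)
    have h1 := bev_red hvz (hwy i) ((rho_col v (w i) (hwv i) k).2 hk)
    by_cases hk0 : k = 0
    · rw [← hk, hk0]; rfl
    · exfalso
      refine chk29'' (c6 i) (hc6 i) k hk0 ?_
      rw [hz6, hy6] at h1
      have h2 := map_bev (Int.castRingHom (ZMod 29)) 6 ((c6 i : ℕ) : ℤ) (AA k)
      have h3 : (Int.castRingHom (ZMod 29)) (bev (AA k) 6 ((c6 i : ℕ) : ℤ)) = 0 := h2.trans h1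
      exact (ZMod.intCast_zmod_eq_zero_iff_dvd _ 29).1 h3
  have hall : ∀ j, col v j = 1 → ∃ i, w i = j := by
    classical
    have hsub : Finset.univ.image w ⊆ Finset.univ.filter (fun k => col v k = 1) := by
      intro x hx
      obtain ⟨i, -, rfl⟩ := Finset.mem_image.1 hx
      exact Finset.mem_filter.2 ⟨Finset.mem_univ _, hcol i⟩
    have heq := Finset.eq_of_subset_of_card_le hsub (by
      rw [card_nb, Finset.card_image_of_injective _ hwi, Finset.card_univ, Fintype.card_fin])
    intro j hj
    have : j ∈ Finset.univ.image w := by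
      rw [heq]; exact Finset.mem_filter.2 ⟨Finset.mem_univ _, hj⟩
    obtain ⟨i, -, h⟩ := Finset.mem_image.1 this
    exact ⟨i, h⟩
  -- some root is not rational
  have hex : ∃ e : Fin 55, ψ (rho e) ∉ Set.range (algebraMap ℚ_[29] (Om 29)) := by
    by_contra hcon
    push Not at hcon
    have hn : ∀ e : Fin 55, ∃ z : ℤ_[29], ψ (rho e) = ee 29 z ∧ (fpol τ).eval z = 0 := by
      intro e
      obtain ⟨a, ha⟩ := hcon e
      have h1 := (hr (ψ (rho e))).2 ⟨_, (rho_root _).2 ⟨e, rfl⟩, rfl⟩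
      have h2 : (fpol τ).aeval a = 0 := by
        apply (algebraMap ℚ_[29] (Om 29)).injective
        rw [aeval_def, fpol_eval₂]
        simp only [map_sub, map_add, map_mul, map_qe, map_re, map_zero]
        rw [ha]; exact h1
      obtain ⟨z, rfl⟩ := int_root ht a h2
      refine ⟨z, ha.symm, ?_⟩
      apply ee_inj 29
      rw [fpol_eval]
      simp only [map_sub, map_add, map_mul, map_qe, map_re, map_zero]
      rw [ee_apply, ha]; exact h1
    choose z hz1 hz2 using hn
    have hinj : Function.Injective (fun e => PadicInt.toZMod (z e)) := by
      intro e e' h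
      simp only at h
      let c : Fin 29 := ⟨(PadicInt.toZMod (z e)).val, ZMod.val_lt _⟩
      have hc : PadicInt.toZMod (z e) = (((c : ℕ) : ℤ) : ZMod 29) := by
        simp only [c]
        rw [Int.cast_natCast, ZMod.natCast_zmod_val]
      have hd : (29 : ℤ) ∣ f0 9 (c : ℕ) := by
        have := red_eval ht hc
        rw [hz2, map_zero] at this
        exact (ZMod.intCast_zmod_eq_zero_iff_dvd _ 29).1 this.symm
      obtain ⟨z0, -, -, h3⟩ := hz c hd
      have e1 := h3 _ (hz2 e) hc
      have e2 := h3 _ (hz2 e') (h.symm.trans hc)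
      apply rho_inj
      apply ψ.injective
      rw [hz1, hz1, e1, e2]
    have := Fintype.card_le_of_injective _ hinj
    rw [Fintype.card_fin, ZMod.card] at this
    omega
  obtain ⟨e, he⟩ := hex
  rw [InfiniteGalois.mem_range_algebraMap_iff_fixed] at he
  push Not at he
  obtain ⟨θ, hθ⟩ := he
  obtain ⟨σ, hσ⟩ := hD θ
  refine ⟨v, σ, ?_, ?_, ?_⟩
  · rintro rfl
    exact hθ (hσ (rho e)).symm
  · refine rho_inj (ψ.injective ?_)
    rw [rho_act, hσ, hvz, ee_apply, AlgEquiv.commutes]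
  · intro j hj
    obtain ⟨i, rfl⟩ := hall j hj
    refine rho_inj (ψ.injective ?_)
    rw [rho_act, hσ, hwy, ee_apply, AlgEquiv.commutes]

theorem Kall (v : Fin 55) : ∃ σ : F.Gal, σ ≠ 1 ∧ act σ v = v ∧ ∀ w, col v w = 1 → act σ w = w := by
  obtain ⟨v0, σ, h1, h2, h3⟩ := K29
  obtain ⟨g, hg⟩ := act_trans v v0
  refine ⟨g⁻¹ * σ * g, ?_, ?_, ?_⟩
  · intro h
    apply h1
    have : σ = g * (g⁻¹ * σ * g) * g⁻¹ := by group
    rw [this, h]; group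
  · rw [act_mul, act_mul, hg, h2, act_inv_eq hg]
  · intro w hw
    rw [act_mul, act_mul, h3 _ (by rw [← hg, act_pres, hw]), act_inv_eq rfl]


noncomputable instance actInst : MulAction F.Gal (Fin 55) where
  smul := act
  one_smul := act_one
  mul_smul := act_mul

theorem smul_def' (σ : F.Gal) (i : Fin 55) : σ • i = act σ i := rfl

instance finGal : Finite F.Gal := inferInstanceAs (Finite (Gal(F.SplittingField/RatFunc ℚ)))

theorem eq_of_fix {σ : F.Gal} (h0 : act σ 0 = 0) (h10 : act σ 10 = 10) (h1 : act σ 1 = 1) :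
    σ = 1 := act_faithful σ (fix3 (act_pres σ) h0 h10 h1)

noncomputable abbrev G0 := MulAction.stabilizer F.Gal (0 : Fin 55)
noncomputable abbrev G1 := MulAction.stabilizer G0 (10 : Fin 55)

theorem G0_smul (σ : G0) (i : Fin 55) : σ • i = act σ.1 i := rfl
theorem G0_mem (σ : F.Gal) : σ ∈ G0 ↔ act σ 0 = 0 := Iff.rfl
theorem G1_mem (σ : G0) : σ ∈ G1 ↔ act σ.1 10 = 10 := Iff.rfl

theorem card_G1_le : Nat.card G1 ≤ 4 := by
  let T := Finset.univ.filter (fun k => col 0 k = col 0 1 ∧ col 10 k = col 10 1)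
  have hT : Nat.card T = 4 := by
    rw [Nat.card_eq_fintype_card, Fintype.card_coe]; exact card_cls
  rw [← hT]
  have hm : ∀ σ : G1, act σ.1.1 1 ∈ T := by
    intro σ
    have h0 : act σ.1.1 0 = 0 := σ.1.2
    have h10 : act σ.1.1 10 = 10 := σ.2
    refine Finset.mem_filter.2 ⟨Finset.mem_univ _, ?_, ?_⟩
    · conv_lhs => rw [← h0]
      exact act_pres σ.1.1 0 1
    · conv_lhs => rw [← h10]
      exact act_pres σ.1.1 10 1
  refine Nat.card_le_card_of_injective (fun σ => (⟨act σ.1.1 1, hm σ⟩ : T)) ?_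
  intro σ σ' h
  have h' : act σ.1.1 1 = act σ'.1.1 1 := congrArg Subtype.val h
  have : σ'.1.1⁻¹ * σ.1.1 = 1 := by
    refine eq_of_fix ?_ ?_ ?_
    · rw [act_mul, show act σ.1.1 0 = 0 from σ.1.2]
      exact act_inv_eq σ'.1.2
    · rw [act_mul, show act σ.1.1 10 = 10 from σ.2]
      exact act_inv_eq σ'.2
    · rw [act_mul, h']
      exact act_inv_eq rfl
  exact Subtype.ext (Subtype.ext (inv_mul_eq_one.1 this).symm)

theorem kap_ne {u v : Fin 55} (h : two (nbs u ++ nbs v) = true) {a b : F.Gal} (ha : a ≠ 1)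
    (h1 : act a u = u) (h2 : ∀ w, col u w = 1 → act a w = w)
    (h3 : act b v = v) (h4 : ∀ w, col v w = 1 → act b w = w) : a ≠ b := by
  rintro rfl
  exact ha (act_faithful a (fixnb (act_pres a) h h1 h3 h2 h4))

theorem card_G1 : Nat.card G1 = 4 := by
  refine le_antisymm card_G1_le ?_
  obtain ⟨a, a1, a2, a3⟩ := Kall 0
  obtain ⟨b, b1, b2, b3⟩ := Kall 10
  obtain ⟨c, c1, c2, c3⟩ := Kall 29
  obtain ⟨t1, t2, t3, t4, t5, t6⟩ := tri
  have ab : a ≠ b := kap_ne (u := 0) (v := 10) two_b a1 a2 a3 b2 b3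
  have ac : a ≠ c := kap_ne (u := 0) (v := 29) two_c a1 a2 a3 c2 c3
  have bc : b ≠ c := kap_ne (u := 10) (v := 29) two_d b1 b2 b3 c2 c3
  let mk : (σ : F.Gal) → act σ 0 = 0 → act σ 10 = 10 → G1 := fun σ h h' => ⟨⟨σ, h⟩, h'⟩
  let f : Fin 4 → G1 := ![mk 1 (act_one 0) (act_one 10), mk a a2 (a3 _ t1), mk b (b3 _ t4) b2,
    mk c (c3 _ t5) (c3 _ t6)]
  let g : Fin 4 → F.Gal := ![1, a, b, c]
  have hfg : ∀ i, (f i).1.1 = g i := by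
    intro i; fin_cases i <;> rfl
  have hg : Function.Injective g := by
    intro i j hij
    fin_cases i <;> fin_cases j <;> first | rfl | (exfalso; simp only [g] at hij; revert hij)
    all_goals first
      | exact a1 | exact b1 | exact c1 | exact a1.symm | exact b1.symm | exact c1.symm
      | exact ab | exact ac | exact bc | exact ab.symm | exact ac.symm | exact bc.symm
  have hf : Function.Injective f := by
    intro i j hij
    apply hg
    rw [← hfg, ← hfg, hij]
  have := Nat.card_le_card_of_injective f hf
  rwa [Nat.card_eq_fintype_card, Fintype.card_fin] at this

theorem orb10 : (MulAction.orbit G0 (10 : Fin 55)).ncard = 6 := by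
  rw [← card_nb 0, ← Set.ncard_coe_finset]
  congr 1
  ext k
  simp only [Finset.coe_filter, Finset.mem_univ, true_and, Set.mem_ofPred_eq]
  constructor
  · rintro ⟨σ, rfl⟩
    have h0 : act σ.1 0 = 0 := σ.2
    have := act_pres σ.1 0 10
    rw [h0, tri.1] at this
    exact this
  · intro h
    obtain ⟨σ, h1, h2⟩ := Hall 0 10 k tri.1 h
    exact ⟨⟨σ, h1⟩, h2⟩

theorem orb0 : (MulAction.orbit F.Gal (0 : Fin 55)).ncard = 55 := by
  have : MulAction.orbit F.Gal (0 : Fin 55) = Set.univ := by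
    ext k
    simp only [Set.mem_univ, iff_true]
    exact act_trans 0 k
  rw [this, Set.ncard_univ, Nat.card_eq_fintype_card, Fintype.card_fin]

theorem card_Gal : Nat.card F.Gal = 1320 := by
  have h1 := (MulAction.stabilizer F.Gal (0 : Fin 55)).card_mul_index
  have h2 := (MulAction.stabilizer G0 (10 : Fin 55)).card_mul_index
  rw [MulAction.index_stabilizer, orb0] at h1
  rw [MulAction.index_stabilizer, orb10, card_G1] at h2
  rw [← h1, ← h2]

end Bel

theorem belyi_deg55_stmt13 :
    F.natDegree = 55 ∧ Irreducible F ∧ Nat.card F.Gal = 1320 := by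
  exact ⟨Bel.F_natDegree, Bel.F_irr, Bel.card_Gal⟩
end
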